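/- arXiv:2001.02470 — 2 statements merged into one kernel-verified Lean document; each statement's English description precedes it below -/
import Mathlib

section
/- Let x_1,...,x_n be a sequence of elements of the ideal a which forms an unconditioned a-filter regular sequence on M. Assume that for every i with 0 ≤ i ≤ n-1 the canonical map λ^i_M : H^i(x_1,...,x_n; M) → H^i_{⟨x_1,...,x_n⟩}(M) from Koszul cohomology to local cohomology is surjective. Then x_1,...,x_n is an unconditioned ⟨x_1,...,x_n⟩-weak sequence on M; in particular, x_1,...,x_n is an u.s.d-sequence on M. -/
/-!
Formalization of a statement from "A theory of relative generalized Cohen-Macaulay modules"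
by Divaani-Aazar, Ghanbari Doust, Tousi and Zakeri.

Throughout, `R` is a commutative Noetherian ring and `M` a finitely generated `R`-module.
Conventions used below:
* `locH I i M` is the local cohomology module `H^i_I(M)` (Mathlib's `localCohomology`).
* Conditions `cd(I,M) = c`, `ara(I,M) = n`, `f_I(M) = f`, `grade(I,M) = r` are expressed by
  the predicates `IsCd`, `IsAra`, `IsFinDim`, `IsGrade`.
* Sequences are given as functions `Fin r → R`; `pSpan M x i = ⟨x_0,…,x_{i-1}⟩M`.
* Koszul (co)homology is defined via the explicit (co)chain complex on the `p`-element
  subsets of `{0,…,n-1}`, and the canonical map `λ^i` into local cohomology is the structure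
  map (at exponent 1) into the direct limit of Koszul cohomologies of powers of the sequence,
  which is the realization of `H^i_{⟨x⟩}(M)` used in the paper (2.1(iv)).
-/

open CategoryTheory

noncomputable section

variable {R : Type} [CommRing R]

/-! ### Sequences: prefix spans, weak sequences, filter regular sequences, d-sequences -/

/-- `pSpan M x i` is the submodule `⟨x_0, …, x_{i-1}⟩M` of `M`. -/
def pSpan (M : Type) [AddCommGroup M] [Module R M] {r : ℕ} (x : Fin r → R) (i : Fin r) :
    Submodule R M :=
  Ideal.span (x '' {j | j < i}) • (⊤ : Submodule R M)

/-- `x_1, …, x_r` is an `I`-weak sequence on `M`: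
`(⟨x_1,…,x_{i-1}⟩M :_M x_i) ⊆ (⟨x_1,…,x_{i-1}⟩M :_M I)` for all `i`. -/
def IsWeakSeq (I : Ideal R) (M : Type) [AddCommGroup M] [Module R M] {r : ℕ}
    (x : Fin r → R) : Prop :=
  ∀ i : Fin r, ∀ m : M, x i • m ∈ pSpan M x i → ∀ a ∈ I, a • m ∈ pSpan M x i

/-- `x_1, …, x_r` is an `I`-filter regular sequence on `M`:
`(⟨x_1,…,x_{i-1}⟩M :_M x_i) ⊆ ⋃ₜ (⟨x_1,…,x_{i-1}⟩M :_M I^t)` for all `i`. -/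
def IsFilterRegSeq (I : Ideal R) (M : Type) [AddCommGroup M] [Module R M] {r : ℕ}
    (x : Fin r → R) : Prop :=
  ∀ i : Fin r, ∀ m : M, x i • m ∈ pSpan M x i →
    ∃ t : ℕ, ∀ a ∈ I ^ t, a • m ∈ pSpan M x i

/-- An unconditioned `I`-filter regular sequence: filter regular in any order. -/
def IsUncondFilterRegSeq (I : Ideal R) (M : Type) [AddCommGroup M] [Module R M] {r : ℕ}
    (x : Fin r → R) : Prop :=
  ∀ σ : Equiv.Perm (Fin r), IsFilterRegSeq I M (x ∘ σ)

/-- An unconditioned `I`-weak sequence: all positive powers, in any order, form an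
`I`-weak sequence. -/
def IsUncondWeakSeq (I : Ideal R) (M : Type) [AddCommGroup M] [Module R M] {r : ℕ}
    (x : Fin r → R) : Prop :=
  ∀ σ : Equiv.Perm (Fin r), ∀ α : Fin r → ℕ, (∀ k, 0 < α k) →
    IsWeakSeq I M fun k => x (σ k) ^ α k

/-- `x_1, …, x_r` is a d-sequence on `M`:
`(⟨x_1,…,x_{i-1}⟩M :_M x_i x_j) = (⟨x_1,…,x_{i-1}⟩M :_M x_j)` for all `i ≤ j`. -/
def IsDSeq (M : Type) [AddCommGroup M] [Module R M] {r : ℕ} (x : Fin r → R) : Prop :=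
  ∀ i j : Fin r, i ≤ j → ∀ m : M,
    ((x i * x j) • m ∈ pSpan M x i ↔ x j • m ∈ pSpan M x i)

/-- An u.s.d-sequence on `M`: all positive powers, in any order, form a d-sequence. -/
def IsUSDSeq (M : Type) [AddCommGroup M] [Module R M] {r : ℕ} (x : Fin r → R) : Prop :=
  ∀ σ : Equiv.Perm (Fin r), ∀ α : Fin r → ℕ, (∀ k, 0 < α k) →
    IsDSeq M fun k => x (σ k) ^ α k

/-! ### Koszul cochain complexes, Koszul cohomology, and the canonical maps
`λ^i_M : H^i(x; M) → H^i_{⟨x⟩}(M)` -/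

/-- The degree `p` term of the Koszul cochain complex of `M` on `n` elements:
functions on the `p`-element subsets of `{1, …, n}` with values in `M`
(i.e. `Hom(Λ^p R^n, M)`). -/
abbrev KM (M : Type) (n p : ℕ) : Type := {s : Finset (Fin n) // s.card = p} → M

section Koszul

variable {M : Type} [AddCommGroup M] [Module R M]

/-- The Koszul cochain differential `K^p(x; M) → K^{p+1}(x; M)`. -/
def kd {n : ℕ} (x : Fin n → R) (p : ℕ) : KM M n p →ₗ[R] KM M n (p + 1) where
  toFun f t := ∑ j ∈ t.1.attach,
    ((-1 : R) ^ (t.1.filter (fun a => a < j.1)).card * x j.1) •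
      f ⟨t.1.erase j.1, by rw [Finset.card_erase_of_mem j.2, t.2]; omega⟩
  map_add' f g := by
    funext t
    simp [smul_add, Finset.sum_add_distrib]
  map_smul' r f := by
    funext t
    simp [Finset.smul_sum, smul_comm r]

/-- The transition map of Koszul cochain complexes raising the exponent of the defining
sequence by `e`: in degree `p` it multiplies the component at a subset `s`
by `(∏_{j ∈ s} x_j)^e`. -/
def kt {n : ℕ} (x : Fin n → R) (e p : ℕ) : KM M n p →ₗ[R] KM M n p where
  toFun f s := (∏ j ∈ s.1, x j) ^ e • f s
  map_add' f g := by funext s; simp [smul_add]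
  map_smul' r f := by funext s; simp [smul_comm r]

/-- The transition maps are maps of cochain complexes
`K^•(x^u; M) → K^•(x^{u+e}; M)`. -/
theorem kt_kd {n : ℕ} (x : Fin n → R) (u e p : ℕ) :
    (kt (M := M) x e (p + 1)).comp (kd (fun j => x j ^ u) p)
      = (kd (fun j => x j ^ (u + e)) p).comp (kt x e p) := by
  apply LinearMap.ext; intro f
  funext t
  simp only [LinearMap.comp_apply, kd, kt, LinearMap.coe_mk, AddHom.coe_mk]
  rw [Finset.smul_sum]
  refine Finset.sum_congr rfl fun j _ => ?_
  rw [smul_smul, smul_smul]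
  congr 1
  rw [← Finset.mul_prod_erase t.1 x j.2]
  ring

end Koszul

/-- The `R`-module of Koszul `p`-cocycles of `M` with respect to `y`. -/
def kZ {n : ℕ} (y : Fin n → R) (M : Type) [AddCommGroup M] [Module R M] (p : ℕ) :
    Submodule R (KM M n p) :=
  LinearMap.ker (kd y p)

/-- The `R`-module of Koszul `p`-coboundaries of `M` with respect to `y`. -/
def kB {n : ℕ} (y : Fin n → R) (M : Type) [AddCommGroup M] [Module R M] :
    (p : ℕ) → Submodule R (KM M n p)
  | 0 => ⊥
  | (q + 1) => LinearMap.range (kd y q)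

/-- The `p`-th Koszul cohomology module `H^p(y; M)`: cocycles modulo coboundaries. -/
abbrev Hk {n : ℕ} (y : Fin n → R) (M : Type) [AddCommGroup M] [Module R M] (p : ℕ) :=
  kZ y M p ⧸ ((kB y M p ⊓ kZ y M p).comap (kZ y M p).subtype)

section KoszulMaps

variable {M : Type} [AddCommGroup M] [Module R M]

theorem kt_mem_kZ {n : ℕ} (x : Fin n → R) {u v : ℕ} (h : u ≤ v) (p : ℕ) :
    ∀ f ∈ kZ (fun j => x j ^ (u + 1)) M p,
      kt x (v - u) p f ∈ kZ (fun j => x j ^ (v + 1)) M p := by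
  intro f hf
  have he : u + 1 + (v - u) = v + 1 := by omega
  have hc := congrArg (fun φ => φ f) (kt_kd (M := M) x (u + 1) (v - u) p)
  simp only [LinearMap.comp_apply] at hc
  rw [he] at hc
  simp only [kZ, LinearMap.mem_ker] at hf ⊢
  rw [← hc, hf, map_zero]

theorem kt_mem_kB {n : ℕ} (x : Fin n → R) {u v : ℕ} (h : u ≤ v) (p : ℕ) :
    ∀ f ∈ kB (fun j => x j ^ (u + 1)) M p,
      kt x (v - u) p f ∈ kB (fun j => x j ^ (v + 1)) M p := by
  intro f hf
  cases p with
  | zero =>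
      simp only [kB, Submodule.mem_bot] at hf ⊢
      rw [hf, map_zero]
  | succ q =>
      simp only [kB, LinearMap.mem_range] at hf ⊢
      obtain ⟨g, hg⟩ := hf
      refine ⟨kt x (v - u) q g, ?_⟩
      have he : u + 1 + (v - u) = v + 1 := by omega
      have hc := congrArg (fun φ => φ g) (kt_kd (M := M) x (u + 1) (v - u) q)
      simp only [LinearMap.comp_apply] at hc
      rw [he] at hc
      rw [← hc, hg]

end KoszulMaps

/-- The map `H^p(x^{u+1}; M) → H^p(x^{v+1}; M)`, `u ≤ v`, induced by the transition map of
Koszul cochain complexes. -/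
def ktH {n : ℕ} (x : Fin n → R) (M : Type) [AddCommGroup M] [Module R M] (p : ℕ)
    (u v : ℕ) (h : u ≤ v) :
    Hk (fun j => x j ^ (u + 1)) M p →ₗ[R] Hk (fun j => x j ^ (v + 1)) M p :=
  Submodule.mapQ _ _ ((kt x (v - u) p).restrict (kt_mem_kZ x h p)) (by
    rintro ⟨f, hfZ⟩ hfN
    simp only [Submodule.mem_comap, Submodule.mem_inf, Submodule.coe_subtype] at hfN ⊢
    exact ⟨kt_mem_kB x h p f hfN.1, kt_mem_kZ x h p f hfN.2⟩)

/-- `H^p_{⟨x⟩}(M)`, realized as the direct limit of the Koszul cohomology modules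
`H^p(x^{u+1}; M)` along the transition maps (cf. 2.1(iv) in the paper). -/
abbrev KLoc {n : ℕ} (x : Fin n → R) (M : Type) [AddCommGroup M] [Module R M] (p : ℕ) :=
  Module.DirectLimit (fun u : ℕ => Hk (fun j => x j ^ (u + 1)) M p)
    (fun u v h => ktH x M p u v h)

/-- Transport of Koszul cohomology along an equality of defining sequences. -/
def castHk {n : ℕ} (M : Type) [AddCommGroup M] [Module R M] (p : ℕ) {y z : Fin n → R}
    (h : y = z) : Hk y M p →ₗ[R] Hk z M p :=
  Eq.rec (motive := fun w _ => Hk y M p →ₗ[R] Hk w M p) LinearMap.id h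

/-- The canonical map `λ^p_M : H^p(x; M) → H^p_{⟨x⟩}(M)`, i.e. the structure map of the
direct limit at exponent `1`. -/
def klambda {n : ℕ} (x : Fin n → R) (M : Type) [AddCommGroup M] [Module R M] (p : ℕ) :
    Hk x M p →ₗ[R] KLoc x M p :=
  (Module.DirectLimit.of R ℕ (fun u : ℕ => Hk (fun j => x j ^ (u + 1)) M p)
      (fun u v h => ktH x M p u v h) 0).comp
    (castHk M p (funext fun j => by rw [zero_add, pow_one] :
      x = fun j => x j ^ (0 + 1)))

/-- Surjectivity of the canonical map `λ^p_M : H^p(x; M) → H^p_{⟨x⟩}(M)`. -/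
def LambdaSurj {n : ℕ} (x : Fin n → R) (M : Type) [AddCommGroup M] [Module R M] (p : ℕ) :
    Prop :=
  Function.Surjective (klambda x M p)

/-! ### Auxiliary material -/

section Aux

variable {M : Type} [AddCommGroup M] [Module R M]

/-- Extension of a cochain by zero to all finite subsets. -/
def kext {n p : ℕ} (f : KM M n p) (s : Finset (Fin n)) : M :=
  if h : s.card = p then f ⟨s, h⟩ else 0

theorem kext_val {n p : ℕ} (f : KM M n p) (s : {s : Finset (Fin n) // s.card = p}) :
    f s = kext f s.1 := by
  simp [kext, s.2]

theorem kd_apply {n p : ℕ} (x : Fin n → R) (f : KM M n p)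
    (t : {s : Finset (Fin n) // s.card = p + 1}) :
    kd x p f t = ∑ j ∈ t.1, ((-1 : R) ^ (t.1.filter (fun a => a < j)).card * x j) •
      kext f (t.1.erase j) := by
  rw [← Finset.sum_attach]
  simp only [kd, LinearMap.coe_mk, AddHom.coe_mk]
  refine Finset.sum_congr rfl fun j _ => ?_
  rw [kext_val f]

/-- Contraction with the `j`-th basis vector. -/
def ks {n : ℕ} (j : Fin n) (p : ℕ) (g : KM M n (p + 1)) : KM M n p := fun t =>
  if j ∈ t.1 then 0 else
    ((-1 : ℤ) ^ (t.1.filter (fun a => a < j)).card) • kext g (insert j t.1)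

theorem kext_ks {n p : ℕ} (j : Fin n) (g : KM M n (p + 1)) (s : Finset (Fin n))
    (hs : s.card = p) :
    kext (ks j p g) s = if j ∈ s then 0 else
      ((-1 : R) ^ (s.filter (fun a => a < j)).card) • kext g (insert j s) := by
  simp only [kext, hs, dif_pos, ks]
  split_ifs <;> try rfl
  all_goals
    rcases neg_one_pow_eq_or ℤ (s.filter (fun a => a < j)).card with h | h <;>
    rcases Nat.even_or_odd (s.filter (fun a => a < j)).card with h' | h' <;>
    simp_all

theorem ks_kd_zero {n : ℕ} (x : Fin n → R) (j : Fin n) (f : KM M n 0) :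
    ks j 0 (kd x 0 f) = x j • f := by
  funext t
  obtain ⟨t, ht⟩ := t
  obtain rfl : t = ∅ := Finset.card_eq_zero.mp ht
  have h1 : kext (kd x 0 f) {j} = x j • f ⟨∅, ht⟩ := by
    rw [← kext_val (kd x 0 f) ⟨{j}, by simp⟩, kd_apply]
    simp [kext_val f, Finset.filter_singleton]
  simp [ks, h1]

theorem ks_kd {n p : ℕ} (x : Fin n → R) (j : Fin n) (g : KM M n (p + 1)) :
    kd x p (ks j p g) + ks j (p + 1) (kd x (p + 1) g) = x j • g := by
  funext t
  obtain ⟨t, ht⟩ := t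
  rw [Pi.add_apply, Pi.smul_apply, kd_apply, kext_val (ks j (p + 1) _), kext_ks (R := R) _ _ _ ht,
    kext_val g]
  dsimp only
  by_cases hj : j ∈ t
  · rw [if_pos hj, add_zero, Finset.sum_eq_single j]
    · rw [kext_ks (R := R) _ _ _ (by rw [Finset.card_erase_of_mem hj, ht]; omega),
        if_neg (by simp), Finset.insert_erase hj, smul_smul]
      have : (t.erase j).filter (fun a => a < j) = t.filter (fun a => a < j) := by
        ext a; simp only [Finset.mem_filter, Finset.mem_erase]
        constructor
        · rintro ⟨⟨_, h⟩, h'⟩; exact ⟨h, h'⟩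
        · rintro ⟨h, h'⟩; exact ⟨⟨h'.ne, h⟩, h'⟩
      rw [this]
      congr 1
      rw [mul_right_comm, ← pow_add, Even.neg_one_pow ⟨_, rfl⟩, one_mul]
    · intro k hk hkj
      rw [kext_ks (R := R) _ _ _ (by rw [Finset.card_erase_of_mem hk, ht]; omega),
        if_pos (by simp [hj, hkj.symm]), smul_zero]
    · exact fun h => absurd hj h
  · rw [if_neg hj]
    have hc : (insert j t).card = p + 1 + 1 := by rw [Finset.card_insert_of_notMem hj, ht]
    rw [show kext (kd x (p + 1) g) (insert j t) = kd x (p + 1) g ⟨insert j t, hc⟩ from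
      (kext_val _ ⟨insert j t, hc⟩).symm, kd_apply]
    dsimp only
    rw [Finset.sum_insert hj, Finset.erase_insert hj, smul_add, smul_smul, add_left_comm,
      Finset.smul_sum, ← Finset.sum_add_distrib, Finset.sum_eq_zero, add_zero]
    · have : (insert j t).filter (fun a => a < j) = t.filter (fun a => a < j) := by
        ext a; simp only [Finset.mem_filter, Finset.mem_insert]
        constructor
        · rintro ⟨h | h, h'⟩
          · exact absurd h h'.ne
          · exact ⟨h, h'⟩
        · rintro ⟨h, h'⟩; exact ⟨Or.inr h, h'⟩
      rw [this]
      congr 1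
      rw [← mul_assoc, ← pow_add, Even.neg_one_pow ⟨_, rfl⟩, one_mul]
    · intro k hk
      have hkj : k ≠ j := fun h => hj (h ▸ hk)
      rw [kext_ks (R := R) _ _ _ (by rw [Finset.card_erase_of_mem hk, ht]; omega),
        if_neg (by simp [hj]), Finset.erase_insert_of_ne hkj.symm, smul_smul, smul_smul, ← add_smul]
      convert zero_smul R _
      rcases lt_or_gt_of_ne hkj with h | h
      · have e1 : (insert j t).filter (fun a => a < k) = t.filter (fun a => a < k) := by
          rw [Finset.filter_insert, if_neg h.not_gt]
        have e2 : (t.erase k).filter (fun a => a < j) = (t.filter (fun a => a < j)).erase k := by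
          rw [Finset.filter_erase]
        have e3 : k ∈ t.filter (fun a => a < j) := by simp [hk, h]
        have e4 := Finset.card_erase_add_one e3
        rw [e1, e2, ← e4]
        ring
      · have e1 : (insert j t).filter (fun a => a < k) = insert j (t.filter (fun a => a < k)) := by
          rw [Finset.filter_insert, if_pos h]
        have e2 : (t.erase k).filter (fun a => a < j) = (t.filter (fun a => a < j)) := by
          rw [Finset.filter_erase, Finset.erase_eq_of_notMem]
          simp [h.not_gt]
        rw [e1, e2, Finset.card_insert_of_notMem (by simp [hj])]
        ring

theorem eq_zero_of_ks {n p : ℕ} (F : KM M n (p + 1)) (h : ∀ j, ks j p F = 0) : F = 0 := by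
  funext t
  obtain ⟨t, ht⟩ := t
  obtain ⟨j, hj⟩ : t.Nonempty := by rw [← Finset.card_pos, ht]; omega
  have h1 := congrFun (h j) ⟨t.erase j, by rw [Finset.card_erase_of_mem hj, ht]; omega⟩
  simp only [ks, Finset.mem_erase, ne_eq, not_true_eq_false, false_and, if_false,
    Finset.insert_erase hj, Pi.zero_apply] at h1
  rw [kext_val F, Pi.zero_apply]
  rcases neg_one_pow_eq_or ℤ ((t.erase j).filter (fun a => a < j)).card with h | h <;>
    simpa [h] using h1

theorem kd_kd {n : ℕ} (x : Fin n → R) (p : ℕ) (f : KM M n p) :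
    kd x (p + 1) (kd x p f) = 0 := by
  induction p with
  | zero =>
    refine eq_zero_of_ks _ fun j => ?_
    have := ks_kd x j (kd x 0 f)
    rw [ks_kd_zero, map_smul] at this
    simpa using this
  | succ p ih =>
    refine eq_zero_of_ks _ fun j => ?_
    have h1 := ks_kd x j (kd x (p + 1) f)
    have h2 := congrArg (kd x (p + 1)) (ks_kd x j f)
    rw [map_add, ih, zero_add, map_smul] at h2
    rw [h2] at h1
    simpa using h1

theorem kd_smul_exact {n p : ℕ} (x : Fin n → R) (j : Fin n) (a : ℕ) (ha : 0 < a)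
    (g : KM M n (p + 1)) (hg : kd x (p + 1) g = 0) :
    ∃ f, kd x p f = x j ^ a • g := by
  obtain ⟨b, rfl⟩ : ∃ b, a = b + 1 := ⟨a - 1, by omega⟩
  refine ⟨x j ^ b • ks j p g, ?_⟩
  have := ks_kd x j g
  rw [hg, show ks j (p + 1) (0 : KM M n (p + 1 + 1)) = 0 by
    funext t; simp [ks, kext], add_zero] at this
  rw [map_smul, this, smul_smul, pow_succ]

theorem kd_map {M' : Type} [AddCommGroup M'] [Module R M'] (π : M →ₗ[R] M') {n p : ℕ}
    (x : Fin n → R) (f : KM M n p) :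
    kd x p (fun s => π (f s)) = fun t => π (kd x p f t) := by
  funext t
  simp [kd, map_sum]

theorem kt_map {M' : Type} [AddCommGroup M'] [Module R M'] (π : M →ₗ[R] M') {n p : ℕ}
    (x : Fin n → R) (e : ℕ) (f : KM M n p) :
    kt x e p (fun s => π (f s)) = fun t => π (kt x e p f t) := by
  funext t
  simp [kt]

theorem kB_map {M' : Type} [AddCommGroup M'] [Module R M'] (π : M →ₗ[R] M') {n p : ℕ}
    (x : Fin n → R) (f : KM M n p) (hf : f ∈ kB x M p) :
    (fun s => π (f s)) ∈ kB x M' p := by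
  cases p with
  | zero =>
    simp only [kB, Submodule.mem_bot] at hf ⊢
    subst hf; funext s; simp
  | succ q =>
    obtain ⟨g, rfl⟩ := hf
    exact ⟨fun s => π (g s), kd_map π x g⟩

theorem kt_kt {n p : ℕ} (x : Fin n → R) (e e' : ℕ) (f : KM M n p) :
    kt x e p (kt x e' p f) = kt x (e' + e) p f := by
  funext t
  simp [kt, smul_smul, ← pow_add, add_comm]

theorem kt_kd_apply {n : ℕ} (x : Fin n → R) (u e p : ℕ) (f : KM M n p) :
    kt x e (p + 1) (kd (fun j => x j ^ u) p f) = kd (fun j => x j ^ (u + e)) p (kt x e p f) :=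
  LinearMap.congr_fun (kt_kd (M := M) x u e p) f

/-- Elementwise form of the surjectivity of `λ^p`. -/
def ESurj {n : ℕ} (x : Fin n → R) (M : Type) [AddCommGroup M] [Module R M] (p : ℕ) : Prop :=
  ∀ (u : ℕ) (f : KM M n p), kd (fun j => x j ^ (1 + u)) p f = 0 →
    ∃ (e : ℕ) (g : KM M n p), kd x p g = 0 ∧
      kt x e p f - kt x (u + e) p g ∈ kB (fun j => x j ^ (1 + (u + e))) M p

theorem ESurj.of_lambdaSurj {n : ℕ} (x : Fin n → R) (p : ℕ) (h : LambdaSurj x M p) :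
    ESurj x M p := by
  intro u f hf
  have hds : DirectedSystem (fun u : ℕ => Hk (fun j => x j ^ (u + 1)) M p)
      (fun u v h => ktH x M p u v h) := by
    constructor
    · intro i z
      obtain ⟨z, rfl⟩ := Submodule.Quotient.mk_surjective _ z
      rw [ktH, Submodule.mapQ_apply]
      congr 1
      apply Subtype.ext
      funext s
      simp [kt]
    · intro k j i hij hjk z
      obtain ⟨z, rfl⟩ := Submodule.Quotient.mk_surjective _ z
      simp only [ktH, Submodule.mapQ_apply]
      congr 1
      apply Subtype.ext
      change kt x (k - j) p (kt x (j - i) p z.1) = kt x (k - i) p z.1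
      rw [kt_kt, show j - i + (k - j) = k - i by omega]
  have hf' : f ∈ kZ (fun j => x j ^ (u + 1)) M p := by
    rw [add_comm 1 u] at hf; exact hf
  obtain ⟨z, hz⟩ := h (Module.DirectLimit.of R ℕ (fun u : ℕ => Hk (fun j => x j ^ (u + 1)) M p)
      (fun u v h => ktH x M p u v h) u (Submodule.Quotient.mk ⟨f, hf'⟩))
  simp only [klambda, LinearMap.comp_apply] at hz
  generalize castHk M p _ z = w at hz
  obtain ⟨⟨g, hg⟩, rfl⟩ := Submodule.Quotient.mk_surjective _ w
  rw [← Module.DirectLimit.of_f (f := fun u v h => ktH x M p u v h) (hij := Nat.zero_le u)] at hz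
  obtain ⟨v, hu, hv⟩ := Module.DirectLimit.exists_eq_of_of_eq hz
  simp only [ktH, Submodule.mapQ_apply] at hv
  rw [eq_comm, Submodule.Quotient.eq, Submodule.mem_comap, Submodule.mem_inf] at hv
  refine ⟨v - u, g, by simpa [kZ] using hg, ?_⟩
  have h1 := hv.1
  have e1 : u + (v - u) = v := by omega
  rw [e1, add_comm 1 v]
  change kt x (v - u) p f - kt x (v - u) p (kt x (u - 0) p g) ∈ _ at h1
  rw [kt_kt, Nat.sub_zero, e1] at h1
  exact h1

theorem ESurj.descend {M' : Type} [AddCommGroup M'] [Module R M'] (π : M →ₗ[R] M')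
    (hπ : Function.Surjective π) {n : ℕ} (x : Fin n → R) (j : Fin n) (a : ℕ) (ha : 0 < a)
    (hker : ∀ m, π m = 0 ↔ ∃ m', m = x j ^ a • m')
    (hann : ∀ m : M, x j ^ a • m = 0 → ∀ k, x k • m = 0)
    (p : ℕ) (h0 : ESurj x M p) (h1 : ESurj x M (p + 1)) : ESurj x M' p := by
  intro u fb hfb
  choose lift hlift using hπ
  obtain ⟨f, rfl⟩ : ∃ f : KM M n p, (fun s => π (f s)) = fb :=
    ⟨fun s => lift (fb s), by funext s; simp [hlift]⟩
  rw [kd_map] at hfb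
  have hh : ∀ t, ∃ m', kd (fun j => x j ^ (1 + u)) p f t = x j ^ a • m' := fun t =>
    (hker _).1 (congrFun hfb t)
  choose h hh using hh
  have hh : kd (fun j => x j ^ (1 + u)) p f = x j ^ a • h := funext hh
  -- the lift of the coboundary is a cocycle after one transition
  have hc : kd (fun j => x j ^ (1 + (u + 1))) (p + 1) (kt x 1 (p + 1) h) = 0 := by
    rw [← add_assoc, ← kt_kd_apply]
    have hd : x j ^ a • kd (fun j => x j ^ (1 + u)) (p + 1) h = 0 := by
      rw [← map_smul, ← hh, kd_kd]
    funext t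
    obtain ⟨k, hk⟩ : t.1.Nonempty := by rw [← Finset.card_pos, t.2]; omega
    have := hann _ (congrFun hd t) k
    simp only [kt, LinearMap.coe_mk, AddHom.coe_mk, pow_one]
    rw [← Finset.prod_erase_mul _ _ hk, mul_smul, this, smul_zero, Pi.zero_apply]
  obtain ⟨e, g, hg, w, hw⟩ := h1 (u + 1) _ hc
  obtain ⟨f0, hf0⟩ := kd_smul_exact x j a ha g hg
  rw [kt_kt] at hw
  have hz : kd (fun j => x j ^ (1 + (u + 1 + e))) p
      (kt x (1 + e) p f - kt x (u + 1 + e) p f0 - x j ^ a • w) = 0 := by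
    rw [map_sub, map_sub, map_smul, hw]
    have e1 : 1 + (u + 1 + e) = (1 + u) + (1 + e) := by omega
    have k1 := kt_kd_apply x (1 + u) (1 + e) p f
    have k2 := kt_kd_apply x 1 (u + 1 + e) p f0
    simp only [pow_one] at k2
    rw [← k2, e1, ← k1, hh, hf0, map_smul, map_smul, smul_sub]
    abel
  obtain ⟨e', f1, hf1, hb⟩ := h0 _ _ hz
  refine ⟨1 + e + e', fun s => π (f0 s + f1 s), ?_, ?_⟩
  · have := kd_map π x (f0 + f1)
    rw [map_add, hf0, hf1, add_zero] at this
    refine this.trans (funext fun t => ?_)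
    exact (hker _).2 ⟨_, rfl⟩
  · have e1 : u + (1 + e + e') = u + 1 + e + e' := by omega
    rw [e1]
    convert kB_map π _ _ hb using 1
    rw [kt_map, show (fun s => π (f0 s + f1 s)) = fun s => π ((f0 + f1) s) from rfl, kt_map, map_sub, map_sub, kt_kt, kt_kt, map_add]
    funext s
    have hw0 : π (kt x e' p (x j ^ a • w) s) = 0 := by
      rw [map_smul]; exact (hker _).2 ⟨_, rfl⟩
    simp only [Pi.sub_apply, Pi.add_apply, map_sub, map_add, hw0]
    abel

theorem ESurj.zero {n : ℕ} (x : Fin n → R) (h : ESurj x M 0) (m : M)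
    (hm : ∀ k, ∃ t : ℕ, x k ^ t • m = 0) (k : Fin n) : x k • m = 0 := by
  choose t ht using hm
  have hu : ∀ k, x k ^ (1 + Finset.univ.sup t) • m = 0 := by
    intro k
    have : t k ≤ 1 + Finset.univ.sup t := by
      have := Finset.le_sup (f := t) (Finset.mem_univ k)
      omega
    rw [← Nat.sub_add_cancel this, pow_add, mul_smul, ht, smul_zero]
  have key : ∀ (y : Fin n → R) (f : KM M n 0) k, ks k 0 (kd y 0 f) = y k • f :=
    fun y f k => ks_kd_zero y k f
  obtain ⟨e, g, hg, hb⟩ := h (Finset.univ.sup t) (fun _ => m) (by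
    refine eq_zero_of_ks _ fun k => ?_
    rw [key]
    funext s
    exact hu k)
  simp only [kB, Submodule.mem_bot] at hb
  have h1 := congrFun hb ⟨∅, by simp⟩
  simp only [kt, LinearMap.coe_mk, AddHom.coe_mk, Pi.sub_apply, Finset.prod_empty, one_pow,
    one_smul, Pi.zero_apply] at h1
  rw [sub_eq_zero.mp h1]
  have h2 := key x g k
  rw [hg] at h2
  have h3 := congrFun h2 ⟨∅, by simp⟩
  simpa [ks, kext, eq_comm] using h3

/-- `⟨y_j : j ∈ S⟩M`. -/
def sSpan (M : Type) [AddCommGroup M] [Module R M] {n : ℕ} (y : Fin n → R)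
    (S : Finset (Fin n)) : Submodule R M :=
  Ideal.span (y '' (S : Set (Fin n))) • (⊤ : Submodule R M)

theorem mem_sSpan_insert {n : ℕ} (y : Fin n → R) (S : Finset (Fin n)) (j : Fin n) (m : M) :
    m ∈ sSpan M y (insert j S) ↔ ∃ m', m - y j • m' ∈ sSpan M y S := by
  rw [sSpan, sSpan, Finset.coe_insert, Set.image_insert_eq, Ideal.span_insert, Submodule.sup_smul,
    Submodule.mem_sup]
  constructor
  · rintro ⟨a, ha, b, hb, rfl⟩
    rw [Submodule.ideal_span_singleton_smul, Submodule.mem_smul_pointwise_iff_exists] at ha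
    obtain ⟨m', -, rfl⟩ := ha
    exact ⟨m', by simpa using hb⟩
  · rintro ⟨m', hm'⟩
    refine ⟨y j • m', ?_, _, hm', by abel⟩
    exact Submodule.smul_mem_smul (Ideal.mem_span_singleton_self _) trivial

theorem sSpan_congr {n : ℕ} {y z : Fin n → R} {S : Finset (Fin n)} (h : ∀ j ∈ S, y j = z j) :
    sSpan M y S = sSpan M z S := by
  rw [sSpan, sSpan, Set.image_congr h]

/-- Elements moved into `N` by a power of `c`. -/
def InSat (c : R) (N : Submodule R M) (m : M) : Prop := ∃ t : ℕ, c ^ t • m ∈ N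

theorem InSat.mono {c : R} {N N' : Submodule R M} (h : N ≤ N') {m : M} (hm : InSat c N m) :
    InSat c N' m := by
  obtain ⟨t, ht⟩ := hm
  exact ⟨t, h ht⟩

theorem InSat.smul_pow {c : R} {N : Submodule R M} {m : M} (t : ℕ) (hm : InSat c N (c ^ t • m)) :
    InSat c N m := by
  obtain ⟨s, hs⟩ := hm
  exact ⟨s + t, by rwa [pow_add, mul_smul]⟩

/-- All elements of the sequence are regular up to `c`-power torsion. -/
def QReg (M : Type) [AddCommGroup M] [Module R M] {n : ℕ} (c : R) (y : Fin n → R) : Prop :=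
  ∀ (S : Finset (Fin n)) (i : Fin n), i ∉ S → ∀ m : M,
    y i • m ∈ sSpan M y S → InSat c (sSpan M y S) m

theorem QReg.sat {n : ℕ} {c : R} {y : Fin n → R} (h : QReg M c y) {S : Finset (Fin n)} {i : Fin n}
    (hi : i ∉ S) {m : M} (hm : InSat c (sSpan M y S) (y i • m)) : InSat c (sSpan M y S) m := by
  obtain ⟨t, ht⟩ := hm
  rw [smul_comm] at ht
  exact (h S i hi _ ht).smul_pow

theorem QReg.mul {n : ℕ} {c : R} {y : Fin n → R} (j : Fin n) (z : R) (h : QReg M c y)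
    (h' : QReg M c (Function.update y j z)) : QReg M c (Function.update y j (y j * z)) := by
  intro S i hi m hm
  by_cases hj : j ∈ S
  · obtain ⟨T, hjT, rfl⟩ : ∃ T, j ∉ T ∧ S = insert j T :=
      ⟨S.erase j, by simp, (Finset.insert_erase hj).symm⟩
    have hij : i ≠ j := fun h => hi (by simp [h])
    have hiT : i ∉ T := fun h => hi (by simp [h])
    have cT : ∀ w, sSpan M (Function.update y j w) T = sSpan M y T := fun w =>
      sSpan_congr fun k hk => Function.update_of_ne (fun e : k = j => hjT (e ▸ hk)) _ _
    rw [Function.update_of_ne hij] at hm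
    have hm0 := hm
    rw [mem_sSpan_insert, cT, Function.update_self] at hm
    obtain ⟨m1, hm1⟩ := hm
    obtain ⟨t, ht⟩ := h (insert j T) i hi m (by
      rw [mem_sSpan_insert]
      exact ⟨z • m1, by rwa [smul_smul]⟩)
    rw [mem_sSpan_insert] at ht
    obtain ⟨m2, hm2⟩ := ht
    -- `y_j (y_i m2 - z c^t m1) ∈ N`
    have h3 : y j • (y i • m2 - (z * c ^ t) • m1) ∈ sSpan M y T := by
      have a1 := Submodule.smul_mem _ (c ^ t) hm1
      have a2 := Submodule.smul_mem _ (y i) hm2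
      convert Submodule.sub_mem _ a1 a2 using 1
      module
    obtain ⟨s, hs⟩ := h T j hjT _ h3
    have h4 := h' (insert j T) i hi (c ^ s • m2) (by
      rw [mem_sSpan_insert, cT, Function.update_self, Function.update_of_ne hij]
      refine ⟨(c ^ s * c ^ t) • m1, ?_⟩
      convert hs using 1
      module)
    obtain ⟨r, hr⟩ := h4
    rw [mem_sSpan_insert, cT, Function.update_self] at hr
    obtain ⟨m3, hm3⟩ := hr
    refine ⟨r + s + t, ?_⟩
    rw [mem_sSpan_insert, cT, Function.update_self]
    refine ⟨m3, ?_⟩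
    have a1 := Submodule.smul_mem _ (c ^ r * c ^ s) hm2
    have a2 := Submodule.smul_mem _ (y j) hm3
    convert Submodule.add_mem _ a1 a2 using 1
    module
  · have cS : ∀ w, sSpan M (Function.update y j w) S = sSpan M y S := fun w =>
      sSpan_congr fun k hk => Function.update_of_ne (fun e : k = j => hj (e ▸ hk)) _ _
    rw [cS] at hm ⊢
    by_cases hij : i = j
    · subst hij
      rw [Function.update_self, mul_smul] at hm
      have h1 := h S i hi _ hm
      have h2 := h'.sat (S := S) (i := i) hi (m := m)
      rw [cS, Function.update_self] at h2
      exact h2 h1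
    · rw [Function.update_of_ne hij] at hm
      exact h S i hi m hm

theorem QReg.pow_one {n : ℕ} {c : R} {y : Fin n → R} (h : QReg M c y) (j : Fin n) (a : ℕ) :
    QReg M c (Function.update y j (y j ^ (a + 1))) := by
  induction a with
  | zero => simpa using h
  | succ a ih =>
    have := QReg.mul j (y j ^ (a + 1)) h ih
    rwa [← pow_succ'] at this

theorem QReg.pow {n : ℕ} {c : R} {y : Fin n → R} (h : QReg M c y) (e : Fin n → ℕ)
    (he : ∀ k, 0 < e k) : QReg M c (fun k => y k ^ e k) := by
  have key : ∀ F : Finset (Fin n), QReg M c (fun k => if k ∈ F then y k ^ e k else y k) := by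
    intro F
    induction F using Finset.induction_on with
    | empty => simpa using h
    | insert j F hj ih =>
      have := ih.pow_one j (e j - 1)
      rw [Nat.sub_add_cancel (he j)] at this
      convert this using 1
      funext k
      by_cases hk : k = j
      · subst hk; simp [hj]
      · simp [hk]
  simpa using key Finset.univ

theorem exists_perm {n : ℕ} (S : Finset (Fin n)) (i : Fin n) (hi : i ∉ S) :
    ∃ (σ : Equiv.Perm (Fin n)) (k : Fin n), σ k = i ∧ σ '' {j | j < k} = (S : Set (Fin n)) := by
  have hlt : S.card < n := by
    simpa using Finset.card_lt_univ_of_notMem hi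
  let k : Fin n := ⟨S.card, hlt⟩
  have hcard : Fintype.card {j : Fin n // j < k} = Fintype.card {j : Fin n // j ∈ S} := by
    rw [Fintype.card_coe, Fintype.card_subtype]
    have : (Finset.univ.filter fun j : Fin n => j < k) = Finset.Iio k := by ext; simp
    rw [this, Fin.card_Iio]
  let e := Fintype.equivOfCardEq hcard
  let τ := e.extendSubtype
  have h1 : ∀ j, j < k → τ j ∈ S := fun j hj => e.extendSubtype_mem j hj
  have h2 : ∀ j, ¬ j < k → τ j ∉ S := fun j hj => e.extendSubtype_not_mem j hj
  have h3 : ∀ j, j ∈ S → Equiv.swap (τ k) i j = j := fun j hj =>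
    Equiv.swap_apply_of_ne_of_ne (fun h => h2 k (lt_irrefl _) (h ▸ hj)) (fun h => hi (h ▸ hj))
  refine ⟨τ.trans (Equiv.swap (τ k) i), k, by simp, ?_⟩
  ext s
  simp only [Set.mem_image, Set.mem_ofPred_eq, Equiv.trans_apply, Finset.mem_coe]
  constructor
  · rintro ⟨j, hj, rfl⟩
    rw [h3 _ (h1 j hj)]
    exact h1 j hj
  · intro hs
    refine ⟨τ.symm s, ?_, by simp [h3 s hs]⟩
    by_contra hc
    exact h2 _ hc (by simpa using hs)

theorem QReg.of_filterReg (I : Ideal R) {n : ℕ} (x : Fin n → R) (hxI : ∀ j, x j ∈ I)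
    (hfr : IsUncondFilterRegSeq I M x) (c : R) (hc : c ∈ I) : QReg M c x := by
  intro S i hi m hm
  obtain ⟨σ, k, rfl, hS⟩ := exists_perm S i hi
  have hN : pSpan M (x ∘ σ) k = sSpan M x S := by
    rw [pSpan, sSpan, Set.image_comp, hS]
  obtain ⟨t, ht⟩ := hfr σ k m (by rw [hN]; exact hm)
  rw [hN] at ht
  exact ⟨t, ht _ (Ideal.pow_mem_pow hc t)⟩

theorem weak_of_ESurj {n : ℕ} (x : Fin n → R) (e : Fin n → ℕ) (he : ∀ k, 0 < e k)
    (S : Finset (Fin n)) (hq : ∀ k, QReg M (x k) (fun k => x k ^ e k))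
    (h0 : ESurj x (M ⧸ sSpan M (fun k => x k ^ e k) S) 0) (i : Fin n) (hi : i ∉ S) (m : M)
    (hm : x i ^ e i • m ∈ sSpan M (fun k => x k ^ e k) S) (k : Fin n) :
    x k • m ∈ sSpan M (fun k => x k ^ e k) S := by
  have := ESurj.zero x h0 (Submodule.Quotient.mk m) (fun k => by
    obtain ⟨t, ht⟩ := hq k S i hi m hm
    refine ⟨t, ?_⟩
    rwa [← Submodule.Quotient.mk_smul, Submodule.Quotient.mk_eq_zero]) k
  rwa [← Submodule.Quotient.mk_smul, Submodule.Quotient.mk_eq_zero] at this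

theorem ESurj.of_linearEquiv_like {M' : Type} [AddCommGroup M'] [Module R M'] (φ : M ≃ₗ[R] M')
    {n : ℕ} (x : Fin n → R) (p : ℕ) (h : ESurj x M p) : ESurj x M' p := by
  intro u f hf
  obtain ⟨f, rfl⟩ : ∃ f' : KM M n p, (fun s => φ.toLinearMap (f' s)) = f :=
    ⟨fun s => φ.symm (f s), by funext s; simp⟩
  rw [kd_map] at hf
  obtain ⟨e, g, hg, hb⟩ := h u f (by
    funext t
    simpa using congrFun hf t)
  refine ⟨e, fun s => φ.toLinearMap (g s), ?_, ?_⟩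
  · rw [kd_map, hg]; funext t; simp
  · rw [kt_map, kt_map]
    convert kB_map φ.toLinearMap _ _ hb using 1
    funext s
    simp

theorem ESurj.quot {n : ℕ} (x : Fin n → R) (e : Fin n → ℕ) (he : ∀ k, 0 < e k)
    (hq : ∀ k, QReg M (x k) (fun k => x k ^ e k)) (hs : ∀ p, p < n → ESurj x M p)
    (S : Finset (Fin n)) :
    ∀ p, p + S.card < n → ESurj x (M ⧸ sSpan M (fun k => x k ^ e k) S) p := by
  induction S using Finset.induction_on with
  | empty =>
    intro p hp
    have hbot : sSpan M (fun k => x k ^ e k) (∅ : Finset (Fin n)) = ⊥ := by simp [sSpan]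
    exact ESurj.of_linearEquiv_like (Submodule.quotEquivOfEqBot _ hbot).symm x p
      (hs p (by simpa using hp))
  | insert j S hj ih =>
    intro p hp
    rw [Finset.card_insert_of_notMem hj] at hp
    have hle : sSpan M (fun k => x k ^ e k) S ≤ sSpan M (fun k => x k ^ e k) (insert j S) := by
      intro m hm
      rw [mem_sSpan_insert]
      exact ⟨0, by simpa using hm⟩
    refine ESurj.descend (Submodule.factor hle) (Submodule.factor_surjective hle) x j (e j) (he j)
      ?_ ?_ p (ih p (by omega)) (ih (p + 1) (by omega))
    · intro m
      obtain ⟨m, rfl⟩ := Submodule.Quotient.mk_surjective _ m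
      change (Submodule.Quotient.mk m : M ⧸ sSpan M (fun k => x k ^ e k) (insert j S)) = 0 ↔ _
      rw [Submodule.Quotient.mk_eq_zero, mem_sSpan_insert]
      constructor
      · rintro ⟨m', hm'⟩
        refine ⟨Submodule.Quotient.mk m', ?_⟩
        rwa [← Submodule.Quotient.mk_smul, Submodule.Quotient.eq]
      · rintro ⟨m', hm'⟩
        obtain ⟨m', rfl⟩ := Submodule.Quotient.mk_surjective _ m'
        refine ⟨m', ?_⟩
        rwa [← Submodule.Quotient.mk_smul, Submodule.Quotient.eq] at hm'
    · intro m hm k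
      obtain ⟨m, rfl⟩ := Submodule.Quotient.mk_surjective _ m
      rw [← Submodule.Quotient.mk_smul, Submodule.Quotient.mk_eq_zero] at hm ⊢
      exact weak_of_ESurj x e he S hq (ih 0 (by omega)) j hj m hm k

/-- The order-free weak sequence property. -/
theorem weak_core (I : Ideal R) {n : ℕ} (x : Fin n → R) (hxI : ∀ j, x j ∈ I)
    (hfr : IsUncondFilterRegSeq I M x) (hsurj : ∀ i : ℕ, i < n → LambdaSurj x M i)
    (e : Fin n → ℕ) (he : ∀ k, 0 < e k) (S : Finset (Fin n)) (i : Fin n) (hi : i ∉ S)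
    (a : ℕ) (ha : 0 < a) (m : M)
    (hm : x i ^ a • m ∈ sSpan M (fun k => x k ^ e k) S)
    (c : R) (hc : c ∈ Ideal.span (Set.range x)) :
    c • m ∈ sSpan M (fun k => x k ^ e k) S := by
  have hN : sSpan M (fun k => x k ^ e k) S
      = sSpan M (fun k => x k ^ (Function.update e i a) k) S :=
    sSpan_congr fun k hk => by
      rw [Function.update_of_ne (fun h : k = i => hi (h ▸ hk))]
  have he' : ∀ k, 0 < Function.update e i a k := by
    intro k
    by_cases hk : k = i
    · subst hk; simpa using ha
    · rw [Function.update_of_ne hk]; exact he k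
  rw [hN] at hm ⊢
  have hq : ∀ k, QReg M (x k) (fun k => x k ^ (Function.update e i a) k) := fun k =>
    (QReg.of_filterReg I x hxI hfr (x k) (hxI k)).pow _ he'
  have hlt : S.card < n := by simpa using Finset.card_lt_univ_of_notMem hi
  have h0 := ESurj.quot x _ he' hq (fun p hp => ESurj.of_lambdaSurj x p (hsurj p hp)) S 0
    (by omega)
  have hk := weak_of_ESurj x _ he' S hq h0 i hi m (by simpa using hm)
  induction hc using Submodule.span_induction with
  | mem c hc => obtain ⟨k, rfl⟩ := hc; exact hk k
  | zero => simp
  | add c d _ _ h1 h2 => rw [add_smul]; exact Submodule.add_mem _ h1 h2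
  | smul r c _ h1 => rw [smul_assoc]; exact Submodule.smul_mem _ _ h1

theorem pSpan_eq {n : ℕ} (x : Fin n → R) (σ : Equiv.Perm (Fin n)) (α : Fin n → ℕ) (i : Fin n) :
    pSpan M (fun k => x (σ k) ^ α k) i =
      sSpan M (fun k => x k ^ α (σ.symm k)) ((Finset.Iio i).image σ) := by
  rw [pSpan, sSpan, Finset.coe_image, Set.image_image]
  simp [Set.Iio]

end Aux

/-- **Lemma 2.4.** Let `x₁, …, xₙ` be a sequence of elements of the ideal `I` which forms an
unconditioned `I`-filter regular sequence on `M`. Assume that for every `0 ≤ i ≤ n-1` the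
canonical map `λ^i_M : H^i(x₁,…,xₙ; M) → H^i_{⟨x₁,…,xₙ⟩}(M)` from Koszul cohomology to local
cohomology is surjective. Then `x₁, …, xₙ` is an unconditioned `⟨x₁,…,xₙ⟩`-weak sequence on
`M`; in particular, it is an u.s.d-sequence on `M`. -/
theorem lemma_2_4 [IsNoetherianRing R] (I : Ideal R)
    (M : Type) [AddCommGroup M] [Module R M] [Module.Finite R M]
    {n : ℕ} (x : Fin n → R) (hxI : ∀ j, x j ∈ I)
    (hfr : IsUncondFilterRegSeq I M x)
    (hsurj : ∀ i : ℕ, i < n → LambdaSurj x M i) :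
    IsUncondWeakSeq (Ideal.span (Set.range x)) M x ∧ IsUSDSeq M x := by
  have key : ∀ (σ : Equiv.Perm (Fin n)) (α : Fin n → ℕ), (∀ k, 0 < α k) → ∀ i j : Fin n, i ≤ j →
      ∀ a : ℕ, 0 < a → ∀ m : M, x (σ j) ^ a • m ∈ pSpan M (fun k => x (σ k) ^ α k) i →
      ∀ c ∈ Ideal.span (Set.range x), c • m ∈ pSpan M (fun k => x (σ k) ^ α k) i := by
    intro σ α hα i j hij a ha m hm c hc
    rw [pSpan_eq] at hm ⊢
    refine weak_core I x hxI hfr hsurj _ (fun k => hα _) _ (σ j) ?_ a ha m hm c hc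
    simpa using hij
  refine ⟨fun σ α hα i m hm c hc => key σ α hα i i le_rfl (α i) (hα i) m hm c hc, ?_⟩
  intro σ α hα i j hij m
  have hmem : x (σ j) ^ α j ∈ Ideal.span (Set.range x) :=
    Ideal.pow_mem_of_mem _ (Ideal.subset_span (Set.mem_range_self _)) _ (hα j)
  constructor
  · intro h
    dsimp only at h ⊢
    rw [mul_smul] at h
    have h1 := key σ α hα i i le_rfl (α i) (hα i) _ h _ hmem
    rw [smul_smul, ← pow_add] at h1
    exact key σ α hα i j hij (α j + α j) (by have := hα j; omega) m h1 _ hmem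
  · intro h
    dsimp only at h ⊢
    rw [mul_smul]
    exact Submodule.smul_mem _ _ h
end
end

section
/- Let ℓ be a natural number and let x_1,...,x_n be elements of a^{2ℓ}. Then the following are equivalent: (i) x_1,...,x_n is an a^ℓ-weak sequence on M; (ii) a^ℓ · H^i_a(M) = 0 for all 0 ≤ i < n and x_1,...,x_n is an a-filter regular sequence on M. -/
/-!
Formalization of a statement from "A theory of relative generalized Cohen-Macaulay modules"
by Divaani-Aazar, Ghanbari Doust, Tousi and Zakeri.

Throughout, `R` is a commutative Noetherian ring and `M` a finitely generated `R`-module.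
Conventions used below:
* `locH I i M` is the local cohomology module `H^i_I(M)` (Mathlib's `localCohomology`).
* Conditions `cd(I,M) = c`, `ara(I,M) = n`, `f_I(M) = f`, `grade(I,M) = r` are expressed by
  the predicates `IsCd`, `IsAra`, `IsFinDim`, `IsGrade`.
* Sequences are given as functions `Fin r → R`; `pSpan M x i = ⟨x_0,…,x_{i-1}⟩M`.
* Koszul (co)homology is defined via the explicit (co)chain complex on the `p`-element
  subsets of `{0,…,n-1}`, and the canonical map `λ^i` into local cohomology is the structure
  map (at exponent 1) into the direct limit of Koszul cohomologies of powers of the sequence,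
  which is the realization of `H^i_{⟨x⟩}(M)` used in the paper (2.1(iv)).
-/

open CategoryTheory

noncomputable section

variable {R : Type} [CommRing R]

/-! ### Local cohomology, cohomological dimension, arithmetic rank -/

/-- The `i`-th local cohomology module `H^i_I(M)`. -/
abbrev locH (I : Ideal R) (i : ℕ) (M : Type) [AddCommGroup M] [Module R M] : ModuleCat R :=
  (localCohomology I i).obj (ModuleCat.of R M)

/-- `cd(I, M) = c`: the cohomological dimension of `I` on `M` equals `c`, i.e.
`H^c_I(M) ≠ 0` and `H^i_I(M) = 0` for all `i > c`. -/
def IsCd (I : Ideal R) (M : Type) [AddCommGroup M] [Module R M] (c : ℕ) : Prop :=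
  Nontrivial (locH I c M) ∧ ∀ i : ℕ, c < i → Subsingleton (locH I i M)

/-- `f_I(M) = f`: the `I`-finiteness dimension of `M` equals `f`, i.e. `f` is the least
integer such that `H^f_I(M)` is not finitely generated. -/
def IsFinDim (I : Ideal R) (M : Type) [AddCommGroup M] [Module R M] (f : ℕ) : Prop :=
  (∀ i : ℕ, i < f → Module.Finite R (locH I i M)) ∧ ¬ Module.Finite R (locH I f M)

/-- `M` is `I`-relative generalized Cohen-Macaulay: `cd(I,M) ≤ 0` or `cd(I,M) = f_I(M)`. -/
def IsRelGCM (I : Ideal R) (M : Type) [AddCommGroup M] [Module R M] : Prop :=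
  (∀ i : ℕ, 0 < i → Subsingleton (locH I i M)) ∨
    ∃ c : ℕ, IsCd I M c ∧ IsFinDim I M c

/-- `ara(I, M) = n`: the arithmetic rank of `I` with respect to `M` equals `n`, i.e. `n` is the
least integer such that there are `x_1, …, x_n ∈ R` with
`Rad(⟨x_1,…,x_n⟩ + Ann M) = Rad(I + Ann M)`. -/
def IsAra (I : Ideal R) (M : Type) [AddCommGroup M] [Module R M] (n : ℕ) : Prop :=
  IsLeast {k : ℕ | ∃ x : Fin k → R,
    (Ideal.span (Set.range x) + Module.annihilator R M).radical
      = (I + Module.annihilator R M).radical} n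

/-- `x_1, …, x_c` is an `I`-relative system of parameters of `M` (where `c = cd(I,M)`):
the `x_i` lie in `I` and `Rad(⟨x_1,…,x_c⟩ + Ann M) = Rad(I + Ann M)`. -/
def IsRsop (I : Ideal R) (M : Type) [AddCommGroup M] [Module R M] {c : ℕ}
    (x : Fin c → R) : Prop :=
  (∀ j, x j ∈ I) ∧
    (Ideal.span (Set.range x) + Module.annihilator R M).radical
      = (I + Module.annihilator R M).radical

section Helpers
open Limits Opposite


/-- the projection `R/I^s → R/I^t` for `t ≤ s`. -/
def qmap (I : Ideal R) {t s : ℕ} (h : t ≤ s) :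
    ModuleCat.of R (R ⧸ I ^ s) ⟶ ModuleCat.of R (R ⧸ I ^ t) :=
  ModuleCat.ofHom (Submodule.mapQ _ _ LinearMap.id (Ideal.pow_le_pow_right h))

theorem colim_smul_iff {D : Type} [SmallCategory D] [IsFiltered D] (G : D ⥤ ModuleCat.{0} R)
    (c : Cocone G) (hc : IsColimit c) (J : Ideal R) :
    (∀ r ∈ J, ∀ m : c.pt, r • m = 0) ↔
    ∀ (t : D) (e : G.obj t), ∀ r ∈ J, ∃ (s : D) (f : t ⟶ s), G.map f (r • e) = 0 := by
  constructor
  · intro H t e r hr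
    have h2 : c.ι.app t (r • e) = c.ι.app t 0 := by
      rw [map_zero, map_smul]
      exact H r hr _
    obtain ⟨k, f, g, hfg⟩ := Concrete.isColimit_exists_of_rep_eq _ hc _ _ h2
    refine ⟨k, f, ?_⟩
    rw [map_zero] at hfg
    exact hfg
  · intro H r hr m
    obtain ⟨j, y, rfl⟩ := Concrete.isColimit_exists_rep _ hc m
    obtain ⟨s, h, hs⟩ := H j y r hr
    rw [← map_smul, ← c.w h, ConcreteCategory.comp_apply, hs, map_zero]

theorem locH_iff_ext (I : Ideal R) (i : ℕ) (M : ModuleCat.{0} R) (J : Ideal R) :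
    (∀ r ∈ J, ∀ m : (localCohomology I i).obj M, r • m = 0) ↔
    ∀ (t : ℕ) (e : ((_root_.Ext R (ModuleCat.{0} R) i).obj (op (ModuleCat.of R (R ⧸ I ^ t)))).obj M),
      ∀ r ∈ J, ∃ (s : ℕ) (h : t ≤ s),
        ((_root_.Ext R (ModuleCat.{0} R) i).map (qmap I h).op).app M (r • e) = 0 := by
  let D := localCohomology.diagram (localCohomology.idealPowersDiagram I) i
  have hc : IsColimit (((evaluation _ _).obj M).mapCocone (colimit.cocone D)) :=
    isColimitOfPreserves _ (colimit.isColimit D)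
  refine (colim_smul_iff _ _ hc J).trans ?_
  constructor
  · intro H t e r hr
    obtain ⟨k, f, hf⟩ := H (op (op t)) e r hr
    exact ⟨k.unop.unop, leOfHom f.unop.unop, hf⟩
  · intro H t e r hr
    obtain ⟨s, h, hs⟩ := H t.unop.unop e r hr
    exact ⟨op (op s), (homOfLE h).op.op, hs⟩

theorem op_opcycles_exists (K : ChainComplex (ModuleCat.{0} R)ᵒᵖ ℕ) (n : ℕ) (f : (K.X n).unop)
    (hf : (K.d (n+1) n).unop f = 0) : ∃ z : (K.opcycles n).unop, (K.pOpcycles n).unop z = f := by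
  have h : (ShortComplex.mk (K.d (n+1) n) (K.pOpcycles n) (by simp)).Exact :=
    ShortComplex.exact_of_g_is_cokernel _ (K.opcyclesIsCokernel (n+1) n (by simp))
  exact (ShortComplex.moduleCat_exact_iff _).1 h.unop f hf

theorem op_homology_zero (K : ChainComplex (ModuleCat.{0} R)ᵒᵖ ℕ) (n : ℕ)
    (z : (K.opcycles n).unop) : (K.homologyι n).unop z = 0 ↔
      (∃ y, (K.d n ((ComplexShape.down ℕ).next n)).unop y = (K.pOpcycles n).unop z) := by
  have h : (ShortComplex.mk (K.homologyι n) (K.fromOpcycles n ((ComplexShape.down ℕ).next n)) (by simp)).Exact :=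
    ShortComplex.exact_of_f_is_kernel _ (K.homologyIsKernel n _ rfl)
  have h2 : (K.homologyι n).unop z = 0 → ∃ y, (K.fromOpcycles n ((ComplexShape.down ℕ).next n)).unop y = z :=
    (ShortComplex.moduleCat_exact_iff _).1 h.unop z
  have h3 : ∀ y, (K.pOpcycles n).unop ((K.fromOpcycles n ((ComplexShape.down ℕ).next n)).unop y) = (K.d n ((ComplexShape.down ℕ).next n)).unop y := by
    intro y
    rw [← K.p_fromOpcycles]; rfl
  have hm : Mono (K.pOpcycles n).unop := inferInstance
  rw [ModuleCat.mono_iff_injective] at hm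
  constructor
  · intro hz
    obtain ⟨y, hy⟩ := h2 hz
    exact ⟨y, by rw [← h3, hy]⟩
  · rintro ⟨y, hy⟩
    rw [← h3] at hy
    rw [← hm hy]
    have := congrArg Quiver.Hom.unop (K.homologyι_comp_fromOpcycles n ((ComplexShape.down ℕ).next n))
    exact congrArg (fun f => f.hom y) this

section
variable {X X' Y : ModuleCat.{0} R}

/-- The (op) functor `Hom(-, Y)`. -/
abbrev homOp (Y : ModuleCat.{0} R) : ModuleCat.{0} R ⥤ (ModuleCat.{0} R)ᵒᵖ :=
  ((linearYoneda R (ModuleCat.{0} R)).obj Y).rightOp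

/-- The complex computing the old Ext. -/
abbrev oldK (P : ProjectiveResolution X) (Y : ModuleCat.{0} R) : ChainComplex (ModuleCat.{0} R)ᵒᵖ ℕ :=
  ((homOp Y).mapHomologicalComplex _).obj P.complex

/-- The old Ext as homology, with readable types. -/
def oldIso (P : ProjectiveResolution X) (Y : ModuleCat.{0} R) (n : ℕ) :
    ((homOp Y).leftDerived n).obj X ≅ (oldK P Y).homology n :=
  P.isoLeftDerivedObj (homOp Y) n

/-- Opcycles to the old Ext. -/
def oldA (P : ProjectiveResolution X) (Y : ModuleCat.{0} R) (n : ℕ) :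
    ((oldK P Y).opcycles n).unop ⟶ ((_root_.Ext R (ModuleCat.{0} R) n).obj (op X)).obj Y :=
  ((oldK P Y).homologyι n).unop ≫ (oldIso P Y n).hom.unop

theorem oldA_surj (P : ProjectiveResolution X) (Y : ModuleCat.{0} R) (n : ℕ) :
    Function.Surjective (oldA P Y n) := by
  rw [← ModuleCat.epi_iff_surjective]
  unfold oldA
  have : Epi ((oldK P Y).homologyι n).unop := inferInstance
  have : Epi (oldIso P Y n).hom.unop :=
    (inferInstance : Epi (((oldIso P Y n).unop).hom))
  exact @epi_comp _ _ _ _ _ _ ‹_› _ ‹_›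

theorem oldA_eq_zero (P : ProjectiveResolution X) (Y : ModuleCat.{0} R) (n : ℕ) 
    (z : ((oldK P Y).opcycles n).unop) : oldA P Y n z = 0 ↔
      ∃ y : P.complex.X ((ComplexShape.down ℕ).next n) ⟶ Y,
        P.complex.d n ((ComplexShape.down ℕ).next n) ≫ y = ((oldK P Y).pOpcycles n).unop z := by
  refine Iff.trans ?_ (op_homology_zero (oldK P Y) n z)
  have : Mono (oldIso P Y n).hom.unop :=
    (inferInstance : Mono (((oldIso P Y n).unop).hom))
  rw [ModuleCat.mono_iff_injective] at this
  constructor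
  · intro h
    exact this (h.trans (map_zero _).symm)
  · intro h
    unfold oldA
    exact (congrArg _ h).trans (map_zero (oldIso P Y n).hom.unop.hom)

theorem oldA_map {P : ProjectiveResolution X} {P' : ProjectiveResolution X'} {g : X' ⟶ X}
    (φ : ProjectiveResolution.Hom P' P g) (Y : ModuleCat.{0} R) (n : ℕ)
    (z : ((oldK P Y).opcycles n).unop) :
    ∃ z' : ((oldK P' Y).opcycles n).unop,
      ((_root_.Ext R (ModuleCat.{0} R) n).map g.op).app Y (oldA P Y n z) = oldA P' Y n z' ∧
      (φ.hom.f n ≫ (((oldK P Y).pOpcycles n).unop z : P.complex.X n ⟶ Y) : P'.complex.X n ⟶ Y) = 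
        ((oldK P' Y).pOpcycles n).unop z' := by
  let Φ := ((homOp Y).mapHomologicalComplex _).map φ.hom
  refine ⟨(HomologicalComplex.opcyclesMap Φ n).unop z, ?_, ?_⟩
  · have h1 : ((homOp Y).leftDerived n).map g ≫ (oldIso P Y n).hom =
        (oldIso P' Y n).hom ≫ HomologicalComplex.homologyMap Φ n := P'.isoLeftDerivedObj_hom_naturality g P φ.hom
      (by simpa using φ.hom_f_zero_comp_π_f_zero) (homOp Y) n
    have h2 := HomologicalComplex.homologyι_naturality Φ n
    have h3 : ((_root_.Ext R (ModuleCat.{0} R) n).map g.op).app Y = (((homOp Y).leftDerived n).map g).unop := rfl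
    have h4 : oldA P Y n ≫ ((_root_.Ext R (ModuleCat.{0} R) n).map g.op).app Y =
       (HomologicalComplex.opcyclesMap Φ n).unop ≫ oldA P' Y n := by
      rw [h3]
      apply Quiver.Hom.op_inj
      change ((homOp Y).leftDerived n).map g ≫ (oldIso P Y n).hom ≫ (oldK P Y).homologyι n =
        ((oldIso P' Y n).hom ≫ (oldK P' Y).homologyι n) ≫ HomologicalComplex.opcyclesMap Φ n
      rw [reassoc_of% h1, Category.assoc, ← h2]
    exact congrArg (fun f => f.hom z) h4
  · have h2 := congrArg Quiver.Hom.unop (HomologicalComplex.p_opcyclesMap Φ n)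
    exact (congrArg (fun f => f.hom z) h2).symm

theorem newMk_eq_zero (P : ProjectiveResolution X) (n : ℕ) (f : P.complex.X n ⟶ Y)
    (hf : P.complex.d (n+1) n ≫ f = 0) :
    P.extMk f (n+1) rfl hf = 0 ↔
      ∃ y : P.complex.X ((ComplexShape.down ℕ).next n) ⟶ Y,
        P.complex.d n ((ComplexShape.down ℕ).next n) ≫ y = f := by
  cases n with
  | succ p =>
    rw [P.extMk_eq_zero_iff f _ rfl hf p rfl, ChainComplex.next_nat_succ]
  | zero =>
    have : (∃ y : P.complex.X ((ComplexShape.down ℕ).next 0) ⟶ Y,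
        P.complex.d 0 ((ComplexShape.down ℕ).next 0) ≫ y = f) ↔ f = 0 := by
      rw [P.complex.shape _ _ (by simp)]
      constructor
      · rintro ⟨y, rfl⟩; simp
      · rintro rfl; exact ⟨0, by simp⟩
    rw [this]
    constructor
    · intro h
      simp only [← P.extEquivCohomologyClass.apply_eq_iff_eq,
        ProjectiveResolution.extEquivCohomologyClass_extMk,
        ProjectiveResolution.extEquivCohomologyClass_zero,
        CochainComplex.HomComplex.CohomologyClass.mk_eq_zero_iff] at h
      rw [CochainComplex.HomComplex.Cocycle.toSingleMk_mem_coboundaries_iff _ _ _ _ _ 1 (by simp)] at h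
      obtain ⟨g, hg⟩ := h
      have hz : IsZero (P.cochainComplex.X 1) :=
        P.cochainComplex.isZero_of_isStrictlyLE 0 1 (by lia)
      rw [hz.eq_of_src g 0, comp_zero] at hg
      rw [← cancel_epi (P.cochainComplexXIso (-(0:ℕ)) 0 rfl).hom, ← hg, comp_zero]
    · rintro rfl; simp

theorem smul_newMk (P : ProjectiveResolution X) (n : ℕ) (f : P.complex.X n ⟶ Y)
    (hf : P.complex.d (n+1) n ≫ f = 0) (r : R) :
    r • P.extMk f (n+1) rfl hf = P.extMk (r • f) (n+1) rfl (by simp [hf]) := by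
  rw [Abelian.Ext.smul_eq_comp_mk₀, P.extMk_comp_mk₀]
  simp
end

open Abelian in
/-- `J` kills the `i`-th local cohomology, in terms of `Abelian.Ext`. -/
def KK (I J : Ideal R) (i : ℕ) (M : ModuleCat.{0} R) : Prop :=
  ∀ (t : ℕ) (e : Abelian.Ext (ModuleCat.of R (R ⧸ I ^ t)) M i), ∀ r ∈ J,
    ∃ (s : ℕ) (h : t ≤ s), (Abelian.Ext.mk₀ (qmap I h)).comp (r • e) (zero_add _) = 0

theorem locH_iff_KK (I J : Ideal R) (i : ℕ) (M : ModuleCat.{0} R) :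
    (∀ r ∈ J, ∀ m : (localCohomology I i).obj M, r • m = 0) ↔ KK I J i M := by
  rw [locH_iff_ext]
  let P : ∀ t, ProjectiveResolution (ModuleCat.of R (R ⧸ I ^ t)) := fun t => projectiveResolution _
  let φ : ∀ {t s : ℕ} (h : t ≤ s), ProjectiveResolution.Hom (P s) (P t) (qmap I h) := fun h =>
    ⟨ProjectiveResolution.lift (qmap I h) _ _, by
      simpa using ProjectiveResolution.lift_commutes_zero (qmap I h) (P _) (P _)⟩
  constructor
  · intro H t e r hr
    obtain ⟨f, hf, rfl⟩ := (P t).extMk_surjective e (i+1) rfl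
    obtain ⟨z, hz⟩ := op_opcycles_exists (oldK (P t) M) i f hf
    obtain ⟨s, h, hs⟩ := H t (oldA (P t) M i z) r hr
    refine ⟨s, h, ?_⟩
    rw [← map_smul] at hs
    obtain ⟨z', h1, h2⟩ := oldA_map (φ h) M i (r • z)
    rw [h1, oldA_eq_zero, ← h2] at hs
    rw [smul_newMk, ProjectiveResolution.mk₀_comp_extMk _ _ _ _ (φ h), newMk_eq_zero]
    rw [map_smul, hz] at hs
    exact hs
  · intro H t e r hr
    obtain ⟨z, rfl⟩ := oldA_surj (P t) M i e
    let f : (P t).complex.X i ⟶ M := ((oldK (P t) M).pOpcycles i).unop z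
    have hf : (P t).complex.d (i+1) i ≫ f = 0 := by
      have := congrArg Quiver.Hom.unop ((oldK (P t) M).d_pOpcycles (i+1) i)
      exact congrArg (fun g => g.hom z) this
    obtain ⟨s, h, hs⟩ := H t ((P t).extMk f (i+1) rfl hf) r hr
    refine ⟨s, h, ?_⟩
    rw [← map_smul]
    obtain ⟨z', h1, h2⟩ := oldA_map (φ h) M i (r • z)
    rw [h1, oldA_eq_zero, ← h2]
    rw [smul_newMk, ProjectiveResolution.mk₀_comp_extMk _ _ _ _ (φ h), newMk_eq_zero] at hs
    rw [map_smul]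
    exact hs


theorem modSES {A B C : ModuleCat.{0} R} (f : A ⟶ B) (g : B ⟶ C) (hf : Function.Injective f)
    (hg : Function.Surjective g) (w : f ≫ g = 0) (hfg : ∀ b : B, g b = 0 → ∃ a, f a = b) :
    (ShortComplex.mk f g w).ShortExact :=
  { exact := (ShortComplex.moduleCat_exact_iff _).2 hfg
    mono_f := (ModuleCat.mono_iff_injective _).2 hf
    epi_g := (ModuleCat.epi_iff_surjective _).2 hg }

/-- restriction of scalars in Artin-Rees form: a class on a f.g. module with values in an
`I^l`-killed module dies on submodules contained in `I^s L` -/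
theorem ext_dies [IsNoetherianRing R] (I : Ideal R) (l : ℕ) (N : ModuleCat.{0} R)
    (hN : ∀ r ∈ I ^ l, ∀ m : N, r • m = 0) (j : ℕ) :
    ∀ (L : ModuleCat.{0} R) [Module.Finite R L] (e : Abelian.Ext L N j),
      ∃ s : ℕ, ∀ (A : ModuleCat.{0} R) (g : A ⟶ L), (∀ a, g a ∈ (I ^ s • ⊤ : Submodule R L)) →
        (Abelian.Ext.mk₀ g).comp e (zero_add _) = 0 := by
  induction j with
  | zero =>
    intro L _ e
    obtain ⟨f, rfl⟩ := Abelian.Ext.mk₀_bijective L N |>.2 e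
    refine ⟨l, fun A g hg => ?_⟩
    rw [Abelian.Ext.mk₀_comp_mk₀, Abelian.Ext.mk₀_eq_zero_iff]
    ext a
    have : (I ^ l • ⊤ : Submodule R L) ≤ LinearMap.ker f.hom := by
      rw [Submodule.smul_le]
      intro r hr n _
      simp [hN r hr]
    exact this (hg a)
  | succ j ih =>
    intro L _ e
    obtain ⟨n, p, hp⟩ := Module.Finite.exists_fin' R L
    let F : ModuleCat.{0} R := ModuleCat.of R (Fin n → R)
    let Q : ModuleCat.{0} R := ModuleCat.of R (LinearMap.ker p)
    let k : Q ⟶ F := ModuleCat.ofHom (LinearMap.ker p).subtype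
    let p' : F ⟶ L := ModuleCat.ofHom p
    have hS : (ShortComplex.mk k p' (by ext x; exact x.2)).ShortExact :=
      modSES _ _ Subtype.val_injective hp _ (fun b hb => ⟨⟨b, hb⟩, rfl⟩)
    have hF : Projective F := (IsProjective.iff_projective (R := R) (P := (Fin n → R))).1 inferInstance
    obtain ⟨e', he'⟩ := Abelian.Ext.contravariant_sequence_exact₃ hS _ e
      (Abelian.Ext.eq_zero_of_projective _) (add_comm 1 j)
    have : Module.Finite R Q := inferInstanceAs (Module.Finite R (LinearMap.ker p))
    obtain ⟨s', hs'⟩ := ih Q e'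
    obtain ⟨c, hc⟩ := Ideal.exists_pow_inf_eq_pow_smul I (LinearMap.ker p)
    refine ⟨c + s', fun A g hg => ?_⟩
    let V : Submodule R (Fin n → R) := I ^ (c + s') • ⊤
    let A₁ : ModuleCat.{0} R := ModuleCat.of R (V ⊓ LinearMap.ker p : Submodule R (Fin n → R))
    let A₂ : ModuleCat.{0} R := ModuleCat.of R V
    let A₃ : ModuleCat.{0} R := ModuleCat.of R (I ^ (c + s') • ⊤ : Submodule R L)
    have hV : V.map p = I ^ (c + s') • ⊤ := by
      rw [Submodule.map_smul'', Submodule.map_top, LinearMap.range_eq_top.2 hp]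
    let α : A₁ ⟶ A₂ := ModuleCat.ofHom (Submodule.inclusion inf_le_left)
    let β : A₂ ⟶ A₃ := ModuleCat.ofHom (p.restrict (p := V) (q := (I ^ (c + s') • ⊤ : Submodule R L)) (fun x hx => by
      rw [← hV]; exact Submodule.mem_map_of_mem hx))
    have hS' : (ShortComplex.mk α β (by ext x; exact x.2.2)).ShortExact := by
      refine modSES _ _ (Submodule.inclusion_injective inf_le_left) ?_ _ ?_
      · rintro ⟨x, hx⟩
        rw [← hV] at hx
        obtain ⟨y, hy, rfl⟩ := hx
        exact ⟨⟨y, hy⟩, rfl⟩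
      · rintro ⟨b, hb⟩ h
        exact ⟨⟨b, hb, congrArg Subtype.val h⟩, rfl⟩
    let τ₁ : A₁ ⟶ Q := ModuleCat.ofHom (Submodule.inclusion inf_le_right)
    let τ₂ : A₂ ⟶ F := ModuleCat.ofHom V.subtype
    let τ₃ : A₃ ⟶ L := ModuleCat.ofHom (Submodule.subtype _)
    have nat := ShortComplex.ShortExact.extClass_naturality hS' hS
      { τ₁ := τ₁, τ₂ := τ₂, τ₃ := τ₃, comm₁₂ := rfl, comm₂₃ := rfl }
    have h0 : (Abelian.Ext.mk₀ τ₁).comp e' (zero_add _) = 0 := by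
      apply hs'
      rintro ⟨a, ha⟩
      have h1 : a ∈ I ^ s' • LinearMap.ker p := by
        have := hc (c + s') (by omega)
        have h2 : a ∈ I ^ (c + s' - c) • (I ^ c • ⊤ ⊓ LinearMap.ker p) := by rw [← this]; exact ha
        rw [Nat.add_sub_cancel_left] at h2
        exact Submodule.smul_mono le_rfl inf_le_right h2
      have h2 : (I ^ s' • ⊤ : Submodule R (LinearMap.ker p)).map (LinearMap.ker p).subtype =
        I ^ s' • LinearMap.ker p := by
        rw [Submodule.map_smul'', Submodule.map_top, Submodule.range_subtype]
      rw [← h2] at h1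
      obtain ⟨y, hy, hya⟩ := h1
      have : y = ⟨a, ha.2⟩ := Subtype.ext hya
      rw [this] at hy
      exact hy
    have h3 : (Abelian.Ext.mk₀ τ₃).comp e (zero_add _) = 0 := by
      rw [← he', ← Abelian.Ext.comp_assoc _ _ _ (zero_add 1) (add_comm 1 j) (by omega)]
      erw [← nat]
      rw [Abelian.Ext.comp_assoc _ _ _ (add_zero 1) (zero_add _) (by omega), h0, Abelian.Ext.comp_zero]
    let g' : A ⟶ A₃ := ModuleCat.ofHom (g.hom.codRestrict _ hg)
    have hg' : g = g' ≫ τ₃ := rfl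
    rw [hg', ← Abelian.Ext.mk₀_comp_mk₀_assoc, h3, Abelian.Ext.comp_zero]


section EZ
open Abelian

/-- restriction of a class along `R/I^s → R/I^t` -/
def res (I : Ideal R) {t s : ℕ} (h : t ≤ s) {M : ModuleCat.{0} R} {i : ℕ}
    (e : Ext (ModuleCat.of R (R ⧸ I ^ t)) M i) : Ext (ModuleCat.of R (R ⧸ I ^ s)) M i :=
  (Ext.mk₀ (qmap I h)).comp e (zero_add _)

/-- pushforward of a class -/
def pf {X M N : ModuleCat.{0} R} {i : ℕ} (e : Ext X M i) (f : M ⟶ N) : Ext X N i :=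
  e.comp (Ext.mk₀ f) (add_zero _)

/-- a class which is eventually zero -/
def EZ (I : Ideal R) {t : ℕ} {M : ModuleCat.{0} R} {i : ℕ}
    (e : Ext (ModuleCat.of R (R ⧸ I ^ t)) M i) : Prop :=
  ∃ (s : ℕ) (h : t ≤ s), res I h e = 0

variable (I : Ideal R) {t s : ℕ} (h : t ≤ s) {M N P : ModuleCat.{0} R} {i : ℕ}

theorem pf_pf {X : ModuleCat.{0} R} (e : Ext X M i) (f : M ⟶ N) (g : N ⟶ P) :
    pf (pf e f) g = pf e (f ≫ g) := by
  simp [pf]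

theorem pf_smul {X : ModuleCat.{0} R} (r : R) (e : Ext X M i) (f : M ⟶ N) :
    pf (r • e) f = r • pf e f := by
  simp [pf]

theorem pf_add {X : ModuleCat.{0} R} (e e' : Ext X M i) (f : M ⟶ N) :
    pf (e + e') f = pf e f + pf e' f := by
  simp [pf]

theorem pf_sub {X : ModuleCat.{0} R} (e e' : Ext X M i) (f : M ⟶ N) :
    pf (e - e') f = pf e f - pf e' f := by
  simp [pf, sub_eq_add_neg]

theorem pf_zero {X : ModuleCat.{0} R} (f : M ⟶ N) :
    pf (0 : Ext X M i) f = 0 := by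
  simp [pf]

theorem pf_id_smul {X : ModuleCat.{0} R} (e : Ext X M i) (r : R) : pf e (r • 𝟙 M) = r • e :=
  (Ext.smul_eq_comp_mk₀ e r).symm

theorem pf_id {X : ModuleCat.{0} R} (e : Ext X M i) : pf e (𝟙 M) = e := by
  simp [pf]

theorem pf_sum {X : ModuleCat.{0} R} (e : Ext X M i) {ι : Type} [Fintype ι] (f : ι → (M ⟶ N)) :
    pf e (∑ j, f j) = ∑ j, pf e (f j) := by
  simp [pf, Ext.mk₀_sum, Ext.comp_sum]

theorem pf_smul_right {X : ModuleCat.{0} R} (r : R) (e : Ext X M i) (f : M ⟶ N) :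
    pf e (r • f) = r • pf e f := by
  simp [pf, Ext.mk₀_smul]

theorem pf_comp {X : ModuleCat.{0} R} (e : Ext X M i) (f : M ⟶ N) {k n : ℕ} (ω : Ext N P k)
    (hn : i + k = n) :
    (pf e f).comp ω hn = e.comp ((Ext.mk₀ f).comp ω (zero_add _)) hn := by
  simp [pf]

theorem comp_pf {X : ModuleCat.{0} R} (e : Ext X M i) {k n : ℕ} (ω : Ext M N k) (f : N ⟶ P)
    (hn : i + k = n) :
    pf (e.comp ω hn) f = e.comp (pf ω f) hn := by
  simp [pf]

theorem res_comp (e : Ext (ModuleCat.of R (R ⧸ I ^ t)) M i) {k n : ℕ} (ω : Ext M N k)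
    (hn : i + k = n) : res I h (e.comp ω hn) = (res I h e).comp ω hn := by
  simp only [res]
  rw [Ext.comp_assoc _ _ _ (zero_add _) hn (by omega)]

theorem res_pf (e : Ext (ModuleCat.of R (R ⧸ I ^ t)) M i) (f : M ⟶ N) :
    res I h (pf e f) = pf (res I h e) f := res_comp I h e _ _

theorem res_add (e e' : Ext (ModuleCat.of R (R ⧸ I ^ t)) M i) :
    res I h (e + e') = res I h e + res I h e' := by simp [res]

theorem res_smul (r : R) (e : Ext (ModuleCat.of R (R ⧸ I ^ t)) M i) :
    res I h (r • e) = r • res I h e := by simp [res]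

theorem res_zero : res I h (0 : Ext (ModuleCat.of R (R ⧸ I ^ t)) M i) = 0 := by simp [res]

theorem qmap_comp {u : ℕ} (h' : s ≤ u) : qmap I h' ≫ qmap I h = qmap I (h.trans h') := by
  ext
  rfl

theorem res_res {u : ℕ} (h' : s ≤ u) (e : Ext (ModuleCat.of R (R ⧸ I ^ t)) M i) :
    res I h' (res I h e) = res I (h.trans h') e := by
  simp [res, qmap_comp]

variable {I}

theorem EZ.of_zero : EZ I (0 : Ext (ModuleCat.of R (R ⧸ I ^ t)) M i) := ⟨t, le_rfl, res_zero _ _⟩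

theorem EZ.add {e e' : Ext (ModuleCat.of R (R ⧸ I ^ t)) M i} (he : EZ I e) (he' : EZ I e') :
    EZ I (e + e') := by
  obtain ⟨s, h, hs⟩ := he
  obtain ⟨s', h', hs'⟩ := he'
  refine ⟨max s s', h.trans (le_max_left _ _), ?_⟩
  rw [res_add, ← res_res I h (le_max_left s s'), ← res_res I h' (le_max_right s s'), hs, hs',
    res_zero, res_zero, add_zero]

theorem EZ.sum {ι : Type} (T : Finset ι) {e : ι → Ext (ModuleCat.of R (R ⧸ I ^ t)) M i}
    (he : ∀ j, EZ I (e j)) : EZ I (∑ j ∈ T, e j) :=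
  Finset.sum_induction e (EZ I) (fun _ _ => EZ.add) EZ.of_zero (fun j _ => he j)

theorem EZ.smul {e : Ext (ModuleCat.of R (R ⧸ I ^ t)) M i} (he : EZ I e) (r : R) :
    EZ I (r • e) := by
  obtain ⟨s, h, hs⟩ := he
  exact ⟨s, h, by rw [res_smul, hs, smul_zero]⟩

theorem EZ.pf {e : Ext (ModuleCat.of R (R ⧸ I ^ t)) M i} (he : EZ I e) (f : M ⟶ N) :
    EZ I (pf e f) := by
  obtain ⟨s, h, hs⟩ := he
  exact ⟨s, h, by rw [res_pf, hs, pf_zero]⟩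

theorem EZ.of_res {e : Ext (ModuleCat.of R (R ⧸ I ^ t)) M i} (he : EZ I (res I h e)) :
    EZ I e := by
  obtain ⟨s, h', hs⟩ := he
  exact ⟨s, h.trans h', by rw [← res_res I h h', hs]⟩

theorem smul_eq_zero_of_mem (e : Ext (ModuleCat.of R (R ⧸ I ^ t)) M i) (r : R) (hr : r ∈ I ^ t) :
    r • e = 0 := by
  have h0 : r • 𝟙 (ModuleCat.of R (R ⧸ I ^ t)) = 0 := by
    ext
    change r • (Submodule.Quotient.mk 1 : R ⧸ I ^ t) = 0
    rw [← Submodule.Quotient.mk_smul, Submodule.Quotient.mk_eq_zero]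
    simpa using hr
  rw [← Ext.mk₀_id_comp e, ← Ext.smul_comp, ← Ext.mk₀_smul, h0, Ext.mk₀_zero, Ext.zero_comp]

theorem KK_iff (J : Ideal R) : KK I J i M ↔
    ∀ (t : ℕ) (e : Ext (ModuleCat.of R (R ⧸ I ^ t)) M i), ∀ r ∈ J, EZ I (r • e) := Iff.rfl

/-- connecting class -/
def dl {A B C : ModuleCat.{0} R} {f : A ⟶ B} {g : B ⟶ C} {w : f ≫ g = 0}
    (hS : (ShortComplex.mk f g w).ShortExact) : Ext C A 1 := hS.extClass

section
variable {A B C : ModuleCat.{0} R} {f : A ⟶ B} {g : B ⟶ C} {w : f ≫ g = 0}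
    (hS : (ShortComplex.mk f g w).ShortExact) {X : ModuleCat.{0} R}

theorem ex1 (e : Ext X A (i+1)) (he : pf e f = 0) : ∃ e' : Ext X C i, e'.comp (dl hS) rfl = e :=
  Ext.covariant_sequence_exact₁ X hS e he rfl

theorem ex2 {A B C : ModuleCat.{0} R} {f : A ⟶ B} {g : B ⟶ C} {w : f ≫ g = 0}
    (hS : (ShortComplex.mk f g w).ShortExact) {X : ModuleCat.{0} R} (e : Ext X B i) (he : pf e g = 0) : ∃ e' : Ext X A i, pf e' f = e :=
  Ext.covariant_sequence_exact₂ X hS e he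

theorem ex3 (e : Ext X C i) (he : e.comp (dl hS) rfl = 0) : ∃ e' : Ext X B i, pf e' g = e :=
  Ext.covariant_sequence_exact₃ X hS e rfl he

end

theorem dl_nat {A B C : ModuleCat.{0} R} {f : A ⟶ B} {g : B ⟶ C} {w : f ≫ g = 0}
    (hS : (ShortComplex.mk f g w).ShortExact)
    {A' B' C' : ModuleCat.{0} R} {f' : A' ⟶ B'} {g' : B' ⟶ C'} {w' : f' ≫ g' = 0}
    (hS' : (ShortComplex.mk f' g' w').ShortExact)
    (x : A ⟶ A') (y : B ⟶ B') (z : C ⟶ C') (h1 : x ≫ f' = f ≫ y) (h2 : y ≫ g' = g ≫ z) :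
    pf (dl hS) x = (Ext.mk₀ z).comp (dl hS') (zero_add _) :=
  ShortComplex.ShortExact.extClass_naturality hS hS'
    { τ₁ := x, τ₂ := y, τ₃ := z, comm₁₂ := h1, comm₂₃ := h2 }

/-- positive degree classes with values in an `I^l`-killed module are eventually zero -/
theorem EZ.of_killed [IsNoetherianRing R] (l : ℕ) (hN : ∀ r ∈ I ^ l, ∀ m : N, r • m = 0)
    (e : Ext (ModuleCat.of R (R ⧸ I ^ t)) N (i + 1)) : EZ I e := by
  have ses : ∀ t : ℕ, ∃ w, (ShortComplex.mk
      (ModuleCat.ofHom (Submodule.subtype (I ^ t)) : ModuleCat.of R (I ^ t : Ideal R) ⟶ ModuleCat.of R R)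
      (ModuleCat.ofHom (Submodule.mkQ (I ^ t)) : _ ⟶ ModuleCat.of R (R ⧸ I ^ t)) w).ShortExact := by
    intro t
    refine ⟨?_, modSES _ _ Subtype.val_injective (Submodule.mkQ_surjective _) _ ?_⟩
    · ext x
      exact (Submodule.Quotient.mk_eq_zero _).2 x.2
    · intro b hb
      exact ⟨⟨b, (Submodule.Quotient.mk_eq_zero _).1 hb⟩, rfl⟩
  choose w hS using ses
  have hF : Projective (ModuleCat.of R R) := (IsProjective.iff_projective (R := R) (P := R)).1 inferInstance
  obtain ⟨e', he'⟩ : ∃ e' : Ext (ModuleCat.of R (I ^ t : Ideal R)) N i,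
      (dl (hS t)).comp e' (add_comm 1 i) = e :=
    Ext.contravariant_sequence_exact₃ (hS t) _ e
      (Ext.eq_zero_of_projective _) (add_comm 1 i)
  have : Module.Finite R (ModuleCat.of R (I ^ t : Ideal R)) :=
    inferInstanceAs (Module.Finite R (I ^ t : Ideal R))
  obtain ⟨s, hs⟩ := ext_dies I l N hN i _ e'
  have hle : t ≤ s + t := by omega
  refine ⟨s + t, hle, ?_⟩
  let g : ModuleCat.of R (I ^ (s + t) : Ideal R) ⟶ ModuleCat.of R (I ^ t : Ideal R) :=
    ModuleCat.ofHom (Submodule.inclusion (Ideal.pow_le_pow_right hle))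
  have h0 : (Ext.mk₀ g).comp e' (zero_add _) = 0 := by
    apply hs
    rintro ⟨a, ha⟩
    have h1 : a ∈ I ^ s • (I ^ t : Submodule R R) := by
      rw [smul_eq_mul, ← pow_add]; exact ha
    have h2 : (I ^ s • ⊤ : Submodule R (I ^ t : Ideal R)).map (Submodule.subtype (I ^ t)) =
        I ^ s • (I ^ t : Submodule R R) := by
      rw [Submodule.map_smul'', Submodule.map_top, Submodule.range_subtype]
    rw [← h2] at h1
    obtain ⟨y, hy, hya⟩ := h1
    have h3 : y = ⟨a, Ideal.pow_le_pow_right hle ha⟩ := Subtype.ext hya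
    rw [h3] at hy
    exact hy
  have nat := dl_nat (hS (s + t)) (hS t) g (𝟙 _) (qmap I hle) rfl rfl
  rw [← he']
  simp only [res]
  rw [← Ext.comp_assoc _ _ _ (zero_add 1) (add_comm 1 i) (by omega), ← nat, pf_comp, h0, Ext.comp_zero]

theorem fwd_aux [IsNoetherianRing R] (l : ℕ) (x : R) {G M B C : ModuleCat.{0} R} {j : G ⟶ M}
    {p : M ⟶ B} {w : j ≫ p = 0} (h1 : (ShortComplex.mk j p w).ShortExact)
    {a : B ⟶ M} {q : M ⟶ C} {w' : a ≫ q = 0} (h2 : (ShortComplex.mk a q w').ShortExact)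
    (hpa : p ≫ a = x • 𝟙 M) (hG : ∀ r ∈ I ^ l, ∀ m : G, r • m = 0)
    (hK : KK I (I ^ l) i C) (e : Ext (ModuleCat.of R (R ⧸ I ^ t)) M (i + 1))
    (he : EZ I (x • e)) (r : R) (hr : r ∈ I ^ l) : EZ I (r • e) := by
  obtain ⟨s, h, hs⟩ := he
  apply EZ.of_res h
  rw [res_smul] at hs ⊢
  generalize res I h e = e' at hs ⊢
  obtain ⟨v, hv⟩ := ex1 h2 (pf e' p) (by rw [pf_pf, hpa, pf_id_smul, hs])
  obtain ⟨s', h', hs'⟩ := hK s v r hr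
  apply EZ.of_res h'
  obtain ⟨g, hg⟩ := ex2 h1 (res I h' (r • e')) (by
    rw [← res_pf, pf_smul, ← hv, ← Ext.smul_comp, res_comp]
    simp only [res]
    rw [hs', Ext.zero_comp])
  rw [← hg]
  exact (EZ.of_killed l hG g).pf _

theorem fwd_step [IsNoetherianRing R] (l : ℕ) (x : R) (hx : x ∈ I ^ (2 * l)) (hl : 0 < l)
    {G M B C : ModuleCat.{0} R} {j : G ⟶ M}
    {p : M ⟶ B} {w : j ≫ p = 0} (h1 : (ShortComplex.mk j p w).ShortExact)
    {a : B ⟶ M} {q : M ⟶ C} {w' : a ≫ q = 0} (h2 : (ShortComplex.mk a q w').ShortExact)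
    (hpa : p ≫ a = x • 𝟙 M) (hG : ∀ r ∈ I ^ l, ∀ m : G, r • m = 0)
    (hK : KK I (I ^ l) i C) : KK I (I ^ l) (i + 1) M := by
  rw [KK_iff]
  intro t e
  have main : ∀ k d, d + k = t → ∀ r ∈ I ^ (l + d), EZ I (r • e) := by
    intro k
    induction k with
    | zero =>
      intro d hd r hr
      rw [smul_eq_zero_of_mem e r (Ideal.pow_le_pow_right (by omega) hr)]
      exact EZ.of_zero
    | succ k ih =>
      intro d hd r hr
      rw [pow_add] at hr
      induction hr using Submodule.mul_induction_on' with
      | mem_mul_mem b hb c hc =>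
        rw [mul_smul]
        refine fwd_aux l x h1 h2 hpa hG hK (c • e) ?_ b hb
        rw [← mul_smul]
        refine ih (d + 1) (by omega) _ ?_
        have := Ideal.mul_mem_mul hx hc
        rw [← pow_add] at this
        exact Ideal.pow_le_pow_right (by omega) this
      | add b _ c _ hb hc => rw [add_smul]; exact hb.add hc
  intro r hr
  exact main t 0 (by omega) r hr

theorem bwd_step [IsNoetherianRing R] (l : ℕ) {ι : Type} [Fintype ι] (y z : ι → R)
    (hy : ∀ k, y k ∈ I ^ l) (hz : ∀ k, z k ∈ I ^ l)
    {G M B C F D : ModuleCat.{0} R} {j : G ⟶ M}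
    {p : M ⟶ B} {w : j ≫ p = 0} (h1 : (ShortComplex.mk j p w).ShortExact)
    {a : B ⟶ M} {q : M ⟶ C} {w' : a ≫ q = 0} (h2 : (ShortComplex.mk a q w').ShortExact)
    {b : B ⟶ F} {d : F ⟶ D} {w'' : b ≫ d = 0} (h3 : (ShortComplex.mk b d w'').ShortExact)
    (π : ι → (F ⟶ M)) (σ : ι → (M ⟶ F)) (hπσ : ∑ k, π k ≫ σ k = 𝟙 F)
    (hpb : ∀ k, p ≫ b ≫ π k = z k • 𝟙 M) (θ : D ⟶ C)
    (hθ : (∑ k, y k • π k) ≫ q = d ≫ θ) (ha : a = b ≫ ∑ k, y k • π k)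
    (hG : ∀ r ∈ I ^ l, ∀ m : G, r • m = 0)
    (hK : KK I (I ^ l) i M) (hK' : KK I (I ^ l) (i + 1) M) : KK I (I ^ l) i C := by
  rw [KK_iff] at *
  intro t u r hr
  obtain ⟨s1, e1, he1⟩ := EZ.of_killed l hG ((u.comp (dl h2) rfl).comp (dl h1) rfl)
  apply EZ.of_res e1
  rw [res_smul]
  rw [res_comp, res_comp] at he1
  generalize res I e1 u = u1 at he1 ⊢
  obtain ⟨v0, hv0⟩ := ex3 h1 _ he1
  have hb : EZ I (pf (u1.comp (dl h2) rfl) b) := by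
    rw [← pf_id (pf (u1.comp (dl h2) rfl) b), ← hπσ, pf_sum]
    apply EZ.sum
    intro k
    rw [← pf_pf]
    apply EZ.pf
    rw [← hv0, pf_pf, pf_pf, hpb, pf_id_smul]
    exact hK' _ _ _ (hz k)
  obtain ⟨s2, e2, he2⟩ := hb
  apply EZ.of_res e2
  rw [res_smul]
  rw [res_pf, res_comp] at he2
  replace hv0 := congrArg (res I e2) hv0
  rw [res_comp, res_pf] at hv0
  generalize res I e2 u1 = u2 at he2 hv0 ⊢
  generalize res I e2 v0 = v2 at hv0
  obtain ⟨c, hc⟩ := ex1 h3 _ he2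
  have nat := dl_nat h3 h2 (𝟙 _) _ θ (by rw [Category.id_comp]; exact ha) hθ
  rw [pf_id] at nat
  obtain ⟨v, hv⟩ := ex3 h2 (u2 - pf c θ) (by
    rw [sub_eq_add_neg, Ext.add_comp, Ext.neg_comp, pf_comp, ← nat, hc, add_neg_cancel])
  have hu : u2 = pf v q + pf c θ := by rw [hv]; abel
  rw [hu, smul_add]
  apply EZ.add
  · rw [← pf_smul]
    exact (hK _ _ _ hr).pf _
  · obtain ⟨s3, e3, he3⟩ := (hK' _ v2 r hr).pf p
    apply EZ.of_res e3
    obtain ⟨v', hv'⟩ := ex3 h3 (res I e3 (r • c)) (by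
      rw [← res_comp, Ext.smul_comp, hc, ← hv0, ← pf_smul, he3])
    rw [← pf_smul, res_pf, ← hv', pf_pf, ← hθ, ← pf_pf]
    apply EZ.pf
    rw [pf_sum]
    apply EZ.sum
    intro k
    rw [pf_smul_right]
    exact hK _ _ _ (hy k)

theorem KK_zero_iff (l : ℕ) : KK I (I ^ l) 0 M ↔
    ∀ (t : ℕ) (m : M), (∀ r ∈ I ^ t, r • m = 0) → ∀ r ∈ I ^ l, r • m = 0 := by
  rw [KK_iff]
  constructor
  · intro H t m hm r hr
    let f : ModuleCat.of R (R ⧸ I ^ t) ⟶ M :=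
      ModuleCat.ofHom (Submodule.liftQ (I ^ t) (LinearMap.toSpanSingleton R M m) (fun a ha => hm a ha))
    obtain ⟨s, h, hs⟩ := H t (Ext.mk₀ f) r hr
    rw [res, ← Ext.mk₀_smul, Ext.mk₀_comp_mk₀, Ext.mk₀_eq_zero_iff] at hs
    have := congrArg (fun g => g.hom (Submodule.Quotient.mk 1 : R ⧸ I ^ s)) hs
    have h2 : r • ((1 : R) • m) = 0 := this
    rwa [one_smul] at h2
  · intro H t e r hr
    obtain ⟨f, rfl⟩ := Ext.mk₀_bijective _ _ |>.2 e
    rw [← Ext.mk₀_smul]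
    have : r • f = 0 := by
      ext
      change r • f.hom (Submodule.Quotient.mk 1 : R ⧸ I ^ t) = 0
      apply H t _ _ r hr
      intro a ha
      rw [← map_smul, ← Submodule.Quotient.mk_smul, (Submodule.Quotient.mk_eq_zero _).2, map_zero]
      simpa using ha
    rw [this, Ext.mk₀_zero]
    exact EZ.of_zero

end EZ


section Final

theorem exists_sum_mul (J : Ideal R) (x : R) (hx : x ∈ J * J) :
    ∃ (ι : Type) (_ : Fintype ι) (y z : ι → R), (∀ k, y k ∈ J) ∧ (∀ k, z k ∈ J) ∧
      x = ∑ k, y k * z k := by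
  induction hx using Submodule.mul_induction_on' with
  | mem_mul_mem b hb c hc =>
    exact ⟨Unit, inferInstance, fun _ => b, fun _ => c, fun _ => hb, fun _ => hc, by simp⟩
  | add b _ c _ hb hc =>
    obtain ⟨ι, _, y, z, h1, h2, h3⟩ := hb
    obtain ⟨ι', _, y', z', h1', h2', h3'⟩ := hc
    refine ⟨ι ⊕ ι', inferInstance, Sum.elim y y', Sum.elim z z', ?_, ?_, ?_⟩
    · rintro (k | k)
      exacts [h1 k, h1' k]
    · rintro (k | k)
      exacts [h2 k, h2' k]
    · simp [Fintype.sum_sum_type, h3, h3']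

variable (M : Type) [AddCommGroup M] [Module R M]

/-- multiplication by `x` as an endomorphism -/
abbrev mulx (x : R) : M →ₗ[R] M := LinearMap.lsmul R M x

variable {M}

theorem ses_ker (x : R) : ∃ w, (ShortComplex.mk
    (ModuleCat.ofHom (LinearMap.ker (mulx M x)).subtype :
      ModuleCat.of R (LinearMap.ker (mulx M x)) ⟶ ModuleCat.of R M)
    (ModuleCat.ofHom (LinearMap.ker (mulx M x)).mkQ :
      _ ⟶ ModuleCat.of R (M ⧸ LinearMap.ker (mulx M x))) w).ShortExact := by
  refine ⟨?_, modSES _ _ Subtype.val_injective (Submodule.mkQ_surjective _) _ ?_⟩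
  · ext m
    exact (Submodule.Quotient.mk_eq_zero _).2 m.2
  · intro b hb
    exact ⟨⟨b, (Submodule.Quotient.mk_eq_zero _).1 hb⟩, rfl⟩

theorem ses_quot {A B : Type} [AddCommGroup A] [Module R A] [AddCommGroup B] [Module R B]
    (f : A →ₗ[R] B) (hf : Function.Injective f) (N : Submodule R B)
    (hN : ∀ m, m ∈ N ↔ ∃ m', f m' = m) : ∃ w, (ShortComplex.mk
    (ModuleCat.ofHom f : ModuleCat.of R A ⟶ ModuleCat.of R B)
    (ModuleCat.ofHom N.mkQ : _ ⟶ ModuleCat.of R (B ⧸ N)) w).ShortExact := by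
  refine ⟨?_, modSES _ _ hf (Submodule.mkQ_surjective _) _ ?_⟩
  · ext m
    exact (Submodule.Quotient.mk_eq_zero _).2 ((hN _).2 ⟨m, rfl⟩)
  · intro b hb
    exact (hN _).1 ((Submodule.Quotient.mk_eq_zero _).1 hb)

theorem liftx_inj (x : R) : Function.Injective
    ((LinearMap.ker (mulx M x)).liftQ (mulx M x) le_rfl) := by
  rw [← LinearMap.ker_eq_bot]
  exact Submodule.ker_liftQ_eq_bot _ _ _ le_rfl

theorem liftx_mem (x : R) (N : Submodule R M) (hN : ∀ m, m ∈ N ↔ ∃ m', x • m' = m) :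
    ∀ m, m ∈ N ↔ ∃ m', ((LinearMap.ker (mulx M x)).liftQ (mulx M x) le_rfl) m' = m := by
  intro m
  rw [hN]
  constructor
  · rintro ⟨m', rfl⟩
    exact ⟨Submodule.Quotient.mk m', rfl⟩
  · rintro ⟨m', rfl⟩
    obtain ⟨m', rfl⟩ := Submodule.mkQ_surjective _ m'
    exact ⟨m', rfl⟩

theorem fwd_mod [IsNoetherianRing R] (I : Ideal R) (l : ℕ) (hl : 0 < l) (x : R)
    (hx : x ∈ I ^ (2 * l)) (h0 : ∀ m : M, x • m = 0 → ∀ r ∈ I ^ l, r • m = 0)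
    (N : Submodule R M) (hN : ∀ m, m ∈ N ↔ ∃ m', x • m' = m) (i : ℕ)
    (hK : KK I (I ^ l) i (ModuleCat.of R (M ⧸ N))) : KK I (I ^ l) (i + 1) (ModuleCat.of R M) := by
  obtain ⟨w, h1⟩ := ses_ker (M := M) x
  obtain ⟨w', h2⟩ := ses_quot _ (liftx_inj (M := M) x) N (liftx_mem x N hN)
  refine fwd_step l x hx hl h1 h2 ?_ ?_ hK
  · ext m
    rfl
  · rintro r hr ⟨m, hm⟩
    exact Subtype.ext (h0 m hm r hr)

theorem KK_zero_of (I : Ideal R) (l : ℕ) (hl : 0 < l) (x : R)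
    (hx : x ∈ I ^ (2 * l)) (h0 : ∀ m : M, x • m = 0 → ∀ r ∈ I ^ l, r • m = 0) :
    KK I (I ^ l) 0 (ModuleCat.of R M) := by
  rw [KK_zero_iff]
  intro t (m : M) hm
  have main : ∀ k d, d + k = t → ∀ r ∈ I ^ (l + d), r • m = 0 := by
    intro k
    induction k with
    | zero =>
      intro d hd r hr
      exact hm r (Ideal.pow_le_pow_right (by omega) hr)
    | succ k ih =>
      intro d hd r hr
      rw [pow_add] at hr
      induction hr using Submodule.mul_induction_on' with
      | mem_mul_mem b hb c hc =>
        rw [mul_smul]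
        refine h0 (c • m) ?_ b hb
        rw [← mul_smul]
        refine ih (d + 1) (by omega) _ ?_
        have := Ideal.mul_mem_mul hx hc
        rw [← pow_add] at this
        exact Ideal.pow_le_pow_right (by omega) this
      | add b _ c _ hb hc => rw [add_smul, hb, hc, add_zero]
  intro r hr
  exact main t 0 (by omega) r hr

theorem bwd_mod [IsNoetherianRing R] (I : Ideal R) (l : ℕ) (x : R)
    (hx : x ∈ I ^ (2 * l)) (h0 : ∀ m : M, x • m = 0 → ∀ r ∈ I ^ l, r • m = 0)
    (N : Submodule R M) (hN : ∀ m, m ∈ N ↔ ∃ m', x • m' = m) (i : ℕ)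
    (hK : KK I (I ^ l) i (ModuleCat.of R M)) (hK' : KK I (I ^ l) (i + 1) (ModuleCat.of R M)) :
    KK I (I ^ l) i (ModuleCat.of R (M ⧸ N)) := by
  obtain ⟨w, h1⟩ := ses_ker (M := M) x
  obtain ⟨w', h2⟩ := ses_quot _ (liftx_inj (M := M) x) N (liftx_mem x N hN)
  rw [two_mul, pow_add] at hx
  obtain ⟨ι, _, y, z, hy, hz, hxyz⟩ := exists_sum_mul _ x hx
  classical
  let b : (M ⧸ LinearMap.ker (mulx M x)) →ₗ[R] (ι → M) :=
    (LinearMap.ker (mulx M x)).liftQ (LinearMap.pi fun k => mulx M (z k)) (by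
      intro m hm
      rw [LinearMap.mem_ker]
      ext k
      exact h0 m hm _ (hz k))
  let Y : (ι → M) →ₗ[R] M := ∑ k, y k • LinearMap.proj k
  have hYapp : ∀ f, Y f = ∑ k, y k • f k := by
    intro f
    simp [Y, LinearMap.sum_apply]
  have hbY : ∀ m, Y (b m) = (LinearMap.ker (mulx M x)).liftQ (mulx M x) le_rfl m := by
    intro m
    obtain ⟨m, rfl⟩ := Submodule.mkQ_surjective _ m
    rw [hYapp]
    change ∑ k, y k • z k • m = x • m
    rw [hxyz, Finset.sum_smul]
    simp [mul_smul]
  have hb : Function.Injective b := by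
    intro m m' h
    apply liftx_inj (M := M) x
    rw [← hbY, ← hbY, h]
  obtain ⟨w'', h3⟩ := ses_quot b hb (LinearMap.range b) (fun m => LinearMap.mem_range)
  let θ : ((ι → M) ⧸ LinearMap.range b) →ₗ[R] (M ⧸ N) := Submodule.mapQ _ _ Y (by
    rintro _ ⟨m, rfl⟩
    rw [Submodule.mem_comap, hbY]
    exact (liftx_mem x N hN _).2 ⟨m, rfl⟩)
  let π : ι → (ModuleCat.of R (ι → M) ⟶ ModuleCat.of R M) := fun k =>
    ModuleCat.ofHom (LinearMap.proj k)
  have hY : ∑ k, y k • π k = ModuleCat.ofHom Y := by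
    ext f
    simp [π, Y]
  refine bwd_step l y z hy hz h1 h2 h3 π (fun k => ModuleCat.ofHom (LinearMap.single R (fun _ => M) k))
    ?_ ?_ (ModuleCat.ofHom θ) ?_ ?_ ?_ hK hK'
  · ext f
    simp [π, LinearMap.sum_apply]
  · intro k
    ext m
    rfl
  · rw [hY]
    rfl
  · rw [hY]
    ext m
    exact (hbY (Submodule.Quotient.mk m)).symm
  · rintro r hr ⟨m, hm⟩
    exact Subtype.ext (h0 m hm r hr)

theorem pSpan_zero {n : ℕ} (x : Fin (n + 1) → R) : pSpan M x 0 = ⊥ := by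
  simp [pSpan]

theorem mk_mem_pSpan {n : ℕ} (x : Fin (n + 1) → R) (i : Fin n) (m : M) :
    (Submodule.Quotient.mk m : M ⧸ (Ideal.span {x 0} • ⊤ : Submodule R M)) ∈
      pSpan (M ⧸ (Ideal.span {x 0} • ⊤ : Submodule R M)) (fun k => x k.succ) i ↔
    m ∈ pSpan M x i.succ := by
  have h1 : x '' {j | j < i.succ} = insert (x 0) ((fun k : Fin n => x k.succ) '' {j | j < i}) := by
    ext r
    simp only [Set.mem_image, Set.mem_setOf_eq, Set.mem_insert_iff]
    constructor
    · rintro ⟨j, hj, rfl⟩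
      induction j using Fin.cases with
      | zero => exact Or.inl rfl
      | succ j => exact Or.inr ⟨j, Fin.succ_lt_succ_iff.1 hj, rfl⟩
    · rintro (rfl | ⟨j, hj, rfl⟩)
      · exact ⟨0, Fin.succ_pos i, rfl⟩
      · exact ⟨j.succ, Fin.succ_lt_succ_iff.2 hj, rfl⟩
  rw [pSpan, pSpan, h1, Ideal.span_insert, Submodule.sup_smul, ← Submodule.comap_map_mkQ,
    Submodule.map_smul'', Submodule.map_top, Submodule.range_mkQ]
  rfl

theorem mem_span_smul (x : R) (m : M) :
    m ∈ (Ideal.span {x} • ⊤ : Submodule R M) ↔ ∃ m', x • m' = m := by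
  rw [Submodule.ideal_span_singleton_smul, Submodule.mem_smul_pointwise_iff_exists]
  simp

theorem weak_succ (J : Ideal R) {n : ℕ} (x : Fin (n + 1) → R) : IsWeakSeq J M x ↔
    (∀ m : M, x 0 • m = 0 → ∀ a ∈ J, a • m = 0) ∧
    IsWeakSeq J (M ⧸ (Ideal.span {x 0} • ⊤ : Submodule R M)) (fun k => x k.succ) := by
  constructor
  · intro H
    refine ⟨fun m hm a ha => ?_, fun i m hm a ha => ?_⟩
    · simpa [pSpan_zero] using H 0 m (by simpa [pSpan_zero] using hm) a ha
    · obtain ⟨m, rfl⟩ := Submodule.mkQ_surjective _ m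
      exact (mk_mem_pSpan x i _).2 (H i.succ m ((mk_mem_pSpan x i _).1 hm) a ha)
  · rintro ⟨H0, H⟩ i m hm a ha
    induction i using Fin.cases with
    | zero =>
      rw [pSpan_zero, Submodule.mem_bot] at hm ⊢
      exact H0 m hm a ha
    | succ i =>
      exact (mk_mem_pSpan x i _).1 (H i (Submodule.Quotient.mk m) ((mk_mem_pSpan x i _).2 hm) a ha)

theorem filter_succ (J : Ideal R) {n : ℕ} (x : Fin (n + 1) → R) (H : IsFilterRegSeq J M x) :
    (∀ m : M, x 0 • m = 0 → ∃ t, ∀ a ∈ J ^ t, a • m = 0) ∧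
    IsFilterRegSeq J (M ⧸ (Ideal.span {x 0} • ⊤ : Submodule R M)) (fun k => x k.succ) := by
  refine ⟨fun m hm => ?_, fun i m hm => ?_⟩
  · obtain ⟨t, ht⟩ := H 0 m (by simpa [pSpan_zero] using hm)
    exact ⟨t, fun a ha => by simpa [pSpan_zero] using ht a ha⟩
  · obtain ⟨m, rfl⟩ := Submodule.mkQ_surjective _ m
    obtain ⟨t, ht⟩ := H i.succ m ((mk_mem_pSpan x i _).1 hm)
    exact ⟨t, fun a ha => (mk_mem_pSpan x i _).2 (ht a ha)⟩

theorem fwd_main [IsNoetherianRing R] (I : Ideal R) (l : ℕ) (hl : 0 < l) (n : ℕ) :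
    ∀ (M : Type) [AddCommGroup M] [Module R M] (x : Fin n → R) (_ : ∀ j, x j ∈ I ^ (2 * l)),
      IsWeakSeq (I ^ l) M x → ∀ i < n, KK I (I ^ l) i (ModuleCat.of R M) := by
  induction n with
  | zero => intro M _ _ x _ _ i hi; omega
  | succ n ih =>
    intro M _ _ x hx H i hi
    obtain ⟨h0, H'⟩ := (weak_succ _ x).1 H
    cases i with
    | zero => exact KK_zero_of I l hl (x 0) (hx 0) h0
    | succ i =>
      exact fwd_mod I l hl (x 0) (hx 0) h0 _ (mem_span_smul (x 0)) i
        (ih _ _ (fun j => hx j.succ) H' i (by omega))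

theorem bwd_main [IsNoetherianRing R] (I : Ideal R) (l : ℕ) (n : ℕ) :
    ∀ (M : Type) [AddCommGroup M] [Module R M] (x : Fin n → R) (_ : ∀ j, x j ∈ I ^ (2 * l)),
      (∀ i < n, KK I (I ^ l) i (ModuleCat.of R M)) → IsFilterRegSeq I M x →
        IsWeakSeq (I ^ l) M x := by
  induction n with
  | zero => intro M _ _ x _ _ _ i; exact i.elim0
  | succ n ih =>
    intro M _ _ x hx hK H
    obtain ⟨h0, H'⟩ := filter_succ _ x H
    have h0' : ∀ m : M, x 0 • m = 0 → ∀ a ∈ I ^ l, a • m = 0 := by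
      intro m hm
      obtain ⟨t, ht⟩ := h0 m hm
      exact (KK_zero_iff l).1 (hK 0 (by omega)) t m ht
    refine (weak_succ _ x).2 ⟨h0', ih _ _ (fun j => hx j.succ) (fun i hi => ?_) H'⟩
    exact bwd_mod I l (x 0) (hx 0) h0' _ (mem_span_smul (x 0)) i (hK i (by omega))
      (hK (i + 1) (by omega))

end Final

end Helpers

/-- **Theorem 2.6.** Let `ℓ ≥ 1` and `x₁, …, xₙ ∈ I^(2ℓ)`. Then `x₁, …, xₙ` is an `I^ℓ`-weak
sequence on `M` if and only if `I^ℓ • H^i_I(M) = 0` for all `0 ≤ i < n` and `x₁, …, xₙ` is an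
`I`-filter regular sequence on `M`. -/
theorem theorem_2_6 [IsNoetherianRing R] (I : Ideal R)
    (M : Type) [AddCommGroup M] [Module R M] [Module.Finite R M]
    (ℓ : ℕ) (hℓ : 0 < ℓ) {n : ℕ} (x : Fin n → R) (hx : ∀ j, x j ∈ I ^ (2 * ℓ)) :
    IsWeakSeq (I ^ ℓ) M x ↔
      ((∀ i : ℕ, i < n → ∀ r ∈ I ^ ℓ, ∀ m : locH I i M, r • m = 0) ∧
        IsFilterRegSeq I M x) := by
  constructor
  · intro H
    exact ⟨fun i hi => (locH_iff_KK I (I ^ ℓ) i (ModuleCat.of R M)).2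
      (fwd_main I ℓ hℓ n M x hx H i hi), fun i m hm => ⟨ℓ, H i m hm⟩⟩
  · rintro ⟨hK, H⟩
    exact bwd_main I ℓ n M x hx
      (fun i hi => (locH_iff_KK I (I ^ ℓ) i (ModuleCat.of R M)).1 (hK i hi)) H
end
end
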